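/- There exist absolute constants C_1 > 0, C_2 > 0 and N_0 such that for every natural number N ≥ N_0 one has L(N) ≤ C_2 / (log log log N)^{C_1}. -/

import Mathlib

/-!
The theorem is Shkredov's quantitative version of the corners theorem, proved by a density
increment.

A corner-free set `A ⊆ [1, N]²` of density `α` is intersected with one of its reflections, so that
it contains no corner with `d ≠ 0` of either sign and still has density at least `α ^ 2 / 4`
(`exists_conf`). The objects iterated on are configurations `Conf L e₁ e₂ a`: a corner-free set
`A ⊆ E₁ × E₂ ⊆ [0, L)²`, together with a lower bound `|A| ≥ δ |E₁| |E₂| + s L ^ 2`.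

If `E₁` and `E₂` are uniform in the Fourier sense, then the number of corners in `A` would be large
if the balanced function of `A` relative to `E₁ × E₂` had small box norm. As only degenerate corners
occur, the box norm is large (`box_large`), hence `A` is denser on some `E₁' × E₂'` with
`E₁' ⊆ E₁` and `E₂' ⊆ E₂` (`exists_rect`, `increment`): the relative density grows by a constant
multiple of `δ₀ ^ 10`, where `δ₀` is the initial relative density.

If `E₁` or `E₂` is not uniform, then it has a large nontrivial Fourier coefficient (`bilinear_le`),
so its density fluctuates along progressions of length about `L ^ (1 / 4)` with a suitable common
difference (`energy_inc`). Averaging over pairs of such progressions with the same difference shows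
that on one pair the potential `pot`, the excess of `A` plus a small multiple of the squared
densities of `E₁` and `E₂`, increases (`ap_step`). The potential is bounded, so after boundedly many
steps a uniform pair is reached (`uniformize`).

Alternating the two steps, the relative density exceeds `1` after `O(α⁻²⁰)` rounds, which is absurd
(`no_conf`) as long as the lengths do not run out. Each passage to progressions takes a fourth root
of the length, and the number of passages is at most exponential in a power of `1 / α`, which means
that `N` is at most triply exponential in `C / α ^ 40` (`tower_bound`, `card_bound`). Solving for
`α` gives the theorem with exponent `1 / 40`.
-/

def CornerFree (A : Finset (ℕ × ℕ)) : Prop :=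
  ¬ ∃ k m d : ℕ, 0 < d ∧ (k, m) ∈ A ∧ (k + d, m) ∈ A ∧ (k, m + d) ∈ A

open Classical in
/-- `cornerFreeDensity N = L(N)`, the maximal density of a corner-free subset of
the grid `[1,N]²`. -/
noncomputable def cornerFreeDensity (N : ℕ) : ℝ :=
  ((((Finset.Icc 1 N ×ˢ Finset.Icc 1 N).powerset.filter CornerFree).sup Finset.card : ℕ) : ℝ) /
    (N : ℝ) ^ 2

section

open Finset

/-! ### Fourier analysis on an interval -/

/-- The interval `{0, …, L - 1}`, as a set of integers. -/
noncomputable abbrev seg (L : ℕ) : Finset ℤ := Finset.Ico (0 : ℤ) (L : ℤ)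

/-- The additive character `t ↦ exp (2 π i t)`. -/
noncomputable def ex (t : ℝ) : ℂ := Complex.exp (2 * Real.pi * Complex.I * t)

lemma ex_add (s t : ℝ) : ex (s + t) = ex s * ex t := by
  unfold ex; rw [← Complex.exp_add]; push_cast; ring_nf

lemma norm_ex (t : ℝ) : ‖ex t‖ = 1 := by
  have := Complex.norm_exp_ofReal_mul_I (2 * Real.pi * t)
  unfold ex
  rw [← this]; push_cast; ring_nf

lemma ex_int (n : ℤ) : ex n = 1 := by
  unfold ex
  have := Complex.exp_int_mul_two_pi_mul_I n
  rw [← this]; push_cast; ring_nf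

lemma conj_ex (t : ℝ) : (starRingEnd ℂ) (ex t) = ex (-t) := by
  unfold ex
  rw [← Complex.exp_conj]
  congr 1
  simp only [map_mul, Complex.conj_ofReal, Complex.conj_I, map_ofNat]
  push_cast; ring

lemma ex_nat_mul (r : ℕ) (t : ℝ) : ex (r * t) = ex t ^ r := by
  unfold ex; rw [← Complex.exp_nat_mul]; push_cast; ring_nf

lemma norm_ex_sub_one_le (t : ℝ) : ‖ex t - 1‖ ≤ 2 * Real.pi * |t| := by
  have := Real.norm_exp_I_mul_ofReal_sub_one_le (x := 2 * Real.pi * t)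
  have h : ex t = Complex.exp (Complex.I * ((2 * Real.pi * t : ℝ) : ℂ)) := by
    unfold ex; push_cast; ring_nf
  rw [h]
  refine this.trans ?_
  rw [Real.norm_eq_abs, abs_mul, abs_of_pos Real.two_pi_pos]

/-- Orthogonality of the characters of `ℤ/P`. -/
lemma sum_ex (P : ℕ) (hP : 0 < P) (n : ℤ) (h1 : -(P : ℤ) < n) (h2 : n < P) :
    ∑ r ∈ range P, ex ((r : ℝ) * ((n : ℝ) / P)) = if n = 0 then (P : ℂ) else 0 := by
  have hP' : (P : ℝ) ≠ 0 := by positivity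
  simp_rw [ex_nat_mul]
  split_ifs with h
  · subst h
    have : ex 0 = 1 := by simpa using ex_int 0
    simp [this]
  · have hne : ex ((n : ℝ) / P) ≠ 1 := by
      intro h3
      unfold ex at h3
      rw [Complex.exp_eq_one_iff] at h3
      obtain ⟨k, hk⟩ := h3
      have h4 : ((n : ℝ) / P : ℝ) = k := by
        have h5 : (2 * Real.pi * Complex.I) * (((n : ℝ) / P : ℝ) : ℂ)
            = (2 * Real.pi * Complex.I) * ((k : ℝ) : ℂ) := by
          rw [hk]; push_cast; ring
        have := mul_left_cancel₀ Complex.two_pi_I_ne_zero h5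
        exact_mod_cast this
      have h6 : (n : ℝ) = k * P := by field_simp at h4; linarith
      have h7 : n = k * P := by exact_mod_cast h6
      have hk0 : k ≠ 0 := by rintro rfl; simp at h7; exact h h7
      rcases lt_or_gt_of_ne hk0 with hk | hk
      · nlinarith
      · nlinarith
    rw [geom_sum_eq hne, ← ex_nat_mul]
    have : (P : ℝ) * ((n : ℝ) / P) = ((n : ℤ) : ℝ) := by field_simp
    rw [this, ex_int]; simp

/-- Parseval's identity for a function supported on an interval of length at most the modulus. -/
lemma parseval (P K : ℕ) (hP : 0 < P) (hK : K ≤ P) (u : ℤ → ℝ) :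
    ∑ r ∈ range P, ‖∑ x ∈ seg K, (u x : ℂ) * ex ((r : ℝ) * ((x : ℝ) / P))‖ ^ 2
      = P * ∑ x ∈ seg K, u x ^ 2 := by
  have key : ∀ r ∈ range P, ((‖∑ x ∈ seg K, (u x : ℂ) * ex ((r : ℝ) * ((x : ℝ) / P))‖ ^ 2 : ℝ) : ℂ)
      = ∑ x ∈ seg K, ∑ y ∈ seg K,
        (u x : ℂ) * u y * ex ((r : ℝ) * (((x - y : ℤ) : ℝ) / P)) := by
    intro r _
    push_cast
    rw [← Complex.mul_conj', map_sum, Finset.sum_mul_sum]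
    refine sum_congr rfl fun x _ => sum_congr rfl fun y _ => ?_
    rw [map_mul, conj_ex, Complex.conj_ofReal]
    have : (r : ℝ) * (((x : ℝ) - (y : ℝ)) / P)
      = (r : ℝ) * ((x : ℝ) / P) + -((r : ℝ) * ((y : ℝ) / P)) := by ring
    rw [this, ex_add]; ring
  have : ((∑ r ∈ range P, ‖∑ x ∈ seg K, (u x : ℂ) * ex ((r : ℝ) * ((x : ℝ) / P))‖ ^ 2 : ℝ) : ℂ)
      = ((P * ∑ x ∈ seg K, u x ^ 2 : ℝ) : ℂ) := by
    rw [Complex.ofReal_sum, sum_congr rfl key, sum_comm]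
    push_cast
    rw [mul_sum]
    refine sum_congr rfl fun x hx => ?_
    rw [sum_comm]
    simp_rw [← mul_sum]
    rw [sum_eq_single x]
    · have := sum_ex P hP (x - x) (by simp; omega) (by simp; omega)
      push_cast at this
      rw [this]; simp; ring
    · intro y hy hne
      simp only [seg, mem_Ico] at hx hy
      have := sum_ex P hP (x - y) (by omega) (by omega)
      push_cast at this
      rw [this, if_neg (by omega)]; simp
    · intro h; exact absurd hx h
  exact_mod_cast this

/-- A function all of whose Fourier coefficients are small has small bilinear averages. Here `z`
runs over `[0, 2 L)`, which contains all sums `x + w` with `x, w ∈ [0, L)`, so that the identity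
behind the bound can be expanded in characters of `ℤ/(2 L)` without wrap-around. -/
lemma bilinear_le (L : ℕ) (hL : 0 < L) (g u v : ℤ → ℝ) (κ : ℝ)
    (hg : ∀ x, x ∉ seg L → g x = 0)
    (hu : ∀ x, |u x| ≤ 1) (hv : ∀ x, |v x| ≤ 1)
    (hF : ∀ θ : ℝ, ‖∑ x ∈ seg L, (g x : ℂ) * ex (θ * x)‖ ≤ κ * L) :
    ∑ x ∈ seg L, ∑ z ∈ seg (2 * L), u x * g (z - x) * v z ≤ 3 / 2 * κ * L ^ 2 := by
  set P := 2 * L with hPdef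
  have hP : 0 < P := by omega
  set G : ℕ → ℂ := fun r => ∑ x ∈ seg L, (g x : ℂ) * ex ((r : ℝ) * ((x : ℝ) / P)) with hG
  set U : ℕ → ℂ := fun r => ∑ x ∈ seg L, (u x : ℂ) * ex ((r : ℝ) * ((x : ℝ) / P)) with hU
  set V : ℕ → ℂ := fun r => ∑ x ∈ seg P, (v x : ℂ) * ex ((r : ℝ) * ((x : ℝ) / P)) with hV
  have hGle : ∀ r, ‖G r‖ ≤ κ * L := by
    intro r
    refine le_trans (le_of_eq ?_) (hF ((r : ℝ) / P))
    have : ∀ x ∈ seg L, (g x : ℂ) * ex ((r : ℝ) * ((x : ℝ) / P))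
        = (g x : ℂ) * ex ((r : ℝ) / P * x) := by
      intro x _
      congr 2; ring
    simp only [hG]
    rw [sum_congr rfl this]
  have hid : ((P * ∑ x ∈ seg L, ∑ z ∈ seg P, u x * g (z - x) * v z : ℝ) : ℂ)
      = ∑ r ∈ range P, U r * (G r * (starRingEnd ℂ) (V r)) := by
    have e1 : ∀ r ∈ range P, U r * (G r * (starRingEnd ℂ) (V r))
        = ∑ x ∈ seg L, ∑ z ∈ seg P, ∑ w ∈ seg L,
          (u x : ℂ) * v z * g w * ex ((r : ℝ) * (((w + x - z : ℤ) : ℝ) / P)) := by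
      intro r _
      simp only [hU, hG, hV]
      rw [map_sum, sum_mul]
      refine sum_congr rfl fun x _ => ?_
      rw [sum_mul_sum, sum_comm, mul_sum]
      refine sum_congr rfl fun z _ => ?_
      rw [mul_sum]
      refine sum_congr rfl fun w _ => ?_
      rw [map_mul, conj_ex, Complex.conj_ofReal]
      have : (r : ℝ) * (((w + x - z : ℤ) : ℝ) / P)
        = (r : ℝ) * ((w : ℝ) / P) + (r : ℝ) * ((x : ℝ) / P) + -((r : ℝ) * ((z : ℝ) / P)) := by
        push_cast; ring
      rw [this, ex_add, ex_add]; ring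
    rw [sum_congr rfl e1]
    conv_rhs => rw [sum_comm]
    simp only [Complex.ofReal_mul, Complex.ofReal_sum, Complex.ofReal_natCast]
    rw [mul_sum]
    refine sum_congr rfl fun x hx => ?_
    rw [sum_comm, mul_sum]
    refine sum_congr rfl fun z hz => ?_
    rw [sum_comm]
    simp_rw [← mul_sum]
    simp only [seg, mem_Ico] at hx hz
    have e2 : ∀ w ∈ seg L, (u x : ℂ) * v z * g w *
        ∑ r ∈ range P, ex ((r : ℝ) * (((w + x - z : ℤ) : ℝ) / P))
        = if w = z - x then (P : ℂ) * (u x * g (z - x) * v z) else 0 := by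
      intro w hw
      simp only [seg, mem_Ico] at hw
      rw [sum_ex P hP _ (by omega) (by omega)]
      by_cases h : w = z - x
      · rw [if_pos (by omega), if_pos h, h]; ring
      · rw [if_neg (by omega), if_neg h]; ring
    rw [sum_congr rfl e2, sum_ite_eq']
    split_ifs with h
    · ring
    · rw [hg _ h]; simp
  have hκ : 0 ≤ κ * L := le_trans (norm_nonneg _) (hGle 0)
  have h1 : (P : ℝ) * ∑ x ∈ seg L, ∑ z ∈ seg P, u x * g (z - x) * v z
      ≤ ∑ r ∈ range P, κ * L * ((‖U r‖ ^ 2 + ‖V r‖ ^ 2) / 2) := by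
    calc _ ≤ ‖((P * ∑ x ∈ seg L, ∑ z ∈ seg P, u x * g (z - x) * v z : ℝ) : ℂ)‖ := by
            rw [Complex.norm_real]; exact le_abs_self _
      _ ≤ ∑ r ∈ range P, ‖U r * (G r * (starRingEnd ℂ) (V r))‖ := by
            rw [hid]; exact norm_sum_le _ _
      _ ≤ _ := by
            refine sum_le_sum fun r _ => ?_
            rw [norm_mul, norm_mul, RCLike.norm_conj]
            have := hGle r
            have h3 : ‖U r‖ * ‖V r‖ ≤ (‖U r‖ ^ 2 + ‖V r‖ ^ 2) / 2 := by
              nlinarith [sq_nonneg (‖U r‖ - ‖V r‖)]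
            calc ‖U r‖ * (‖G r‖ * ‖V r‖) = ‖G r‖ * (‖U r‖ * ‖V r‖) := by ring
              _ ≤ κ * L * ((‖U r‖ ^ 2 + ‖V r‖ ^ 2) / 2) := by gcongr
  rw [← mul_sum, ← sum_div, sum_add_distrib, parseval P L hP (by omega),
    parseval P P hP le_rfl] at h1
  have hsum : ∀ (K : ℕ) (w : ℤ → ℝ), (∀ x, |w x| ≤ 1) → ∑ x ∈ seg K, w x ^ 2 ≤ K := by
    intro K w hw
    calc _ ≤ ∑ x ∈ seg K, (1 : ℝ) := sum_le_sum fun x _ => (sq_le_one_iff_abs_le_one _).2 (hw x)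
      _ = K := by simp
  have h2 := hsum L u hu
  have h3 := hsum P v hv
  have hPr : (P : ℝ) = 2 * L := by rw [hPdef]; push_cast; ring
  have hPpos : (0 : ℝ) < P := by positivity
  have h4 : (P : ℝ) * ∑ x ∈ seg L, ∑ z ∈ seg P, u x * g (z - x) * v z
      ≤ P * (3 / 2 * κ * L ^ 2) := by
    refine h1.trans ?_
    have : κ * L * ((P * ∑ x ∈ seg L, u x ^ 2 + P * ∑ x ∈ seg P, v x ^ 2) / 2)
      ≤ κ * L * ((P * L + P * P) / 2) := by gcongr
    refine this.trans (le_of_eq ?_)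
    rw [hPr]; ring
  exact le_of_mul_le_mul_left h4 hPpos

/-! ### Corner-free configurations and uniformity -/

/-- A corner-free configuration of length `L`: `e₁`, `e₂` and `a` are the indicator functions of
sets `E₁, E₂ ⊆ [0, L)` and `A ⊆ E₁ × E₂`, and `A` contains no corner `(x, y), (x + d, y), (x, y + d)`
with `d ≠ 0` of either sign. Indicator functions are real-valued so that they can be combined with
analytic weights. -/
structure Conf (L : ℕ) (e₁ e₂ : ℤ → ℝ) (a : ℤ → ℤ → ℝ) : Prop where
  ind₁ : ∀ x, e₁ x = 0 ∨ e₁ x = 1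
  ind₂ : ∀ x, e₂ x = 0 ∨ e₂ x = 1
  ind : ∀ x y, a x y = 0 ∨ a x y = 1
  supp₁ : ∀ x, x ∉ seg L → e₁ x = 0
  supp₂ : ∀ x, x ∉ seg L → e₂ x = 0
  left : ∀ x y, e₁ x = 0 → a x y = 0
  right : ∀ x y, e₂ y = 0 → a x y = 0
  corner : ∀ x y d, a x y = 1 → a (x + d) y = 1 → a x (y + d) = 1 → d = 0

/-- The total mass of `e` on `[0, L)`. -/
noncomputable def tot (L : ℕ) (e : ℤ → ℝ) : ℝ := ∑ x ∈ seg L, e x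

/-- The total mass of `a` on `[0, L)²`. -/
noncomputable def tot₂ (L : ℕ) (a : ℤ → ℤ → ℝ) : ℝ := ∑ x ∈ seg L, ∑ y ∈ seg L, a x y

/-- The average of `e` over `[0, L)`. -/
noncomputable def mean (L : ℕ) (e : ℤ → ℝ) : ℝ := tot L e / L

/-- The balanced function of `e`: its mean is subtracted on `[0, L)` only, so the support stays in
that interval. -/
noncomputable def bal (L : ℕ) (e : ℤ → ℝ) (x : ℤ) : ℝ :=
  e x - if x ∈ seg L then mean L e else 0

/-- `e` is `η`-uniform on `[0, L)`: its balanced function is nearly orthogonal to all products of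
bounded functions of `x` and `z`, evaluated at `z - x`. This one-sided form is equivalent to the
two-sided one, as `u` may be replaced by `-u`. -/
def Unif (η : ℝ) (L : ℕ) (e : ℤ → ℝ) : Prop :=
  ∀ u v : ℤ → ℝ, (∀ x, |u x| ≤ 1) → (∀ z, |v z| ≤ 1) →
    ∑ x ∈ seg L, ∑ z ∈ seg (2 * L), u x * bal L e (z - x) * v z ≤ η * L ^ 2

lemma card_seg (L : ℕ) : (seg L).card = L := by simp

lemma sum_shift {R : Type*} [AddCommMonoid R] (L : ℕ) (S : Finset ℤ) (h : ℤ → R) (c : ℤ)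
    (hs : ∀ x, x ∉ seg L → h x = 0)
    (hS : ∀ x ∈ seg L, x + c ∈ S) : ∑ z ∈ S, h (z - c) = ∑ x ∈ seg L, h x := by
  have h1 : ∑ x ∈ seg L, h x = ∑ z ∈ (seg L).map (addRightEmbedding c), h (z - c) := by
    rw [sum_map]; simp
  rw [h1]
  symm
  apply sum_subset
  · intro z hz
    obtain ⟨x, hx, rfl⟩ := mem_map.1 hz
    exact hS x hx
  · intro z _ hz
    apply hs
    intro hx
    exact hz (mem_map.2 ⟨z - c, hx, by simp⟩)

lemma mean_nonneg {L : ℕ} {e : ℤ → ℝ} (h : ∀ x, 0 ≤ e x) : 0 ≤ mean L e :=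
  div_nonneg (sum_nonneg fun x _ => h x) (Nat.cast_nonneg _)

lemma tot_eq {L : ℕ} (hL : 0 < L) (e : ℤ → ℝ) : tot L e = mean L e * L := by
  unfold mean; field_simp

lemma tot_le {L : ℕ} {e : ℤ → ℝ} (h : ∀ x, e x ≤ 1) : tot L e ≤ L := by
  calc _ ≤ ∑ x ∈ seg L, (1 : ℝ) := sum_le_sum fun x _ => h x
    _ = L := by simp

lemma mean_le_one {L : ℕ} (hL : 0 < L) {e : ℤ → ℝ} (h : ∀ x, e x ≤ 1) : mean L e ≤ 1 := by
  unfold mean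
  rw [div_le_one (by positivity)]
  exact tot_le h

lemma le_mean_add_bal {L : ℕ} {e : ℤ → ℝ} (h : ∀ x, 0 ≤ e x) (x : ℤ) :
    e x ≤ mean L e + bal L e x := by
  unfold bal
  have := mean_nonneg (L := L) h
  split_ifs <;> linarith

lemma abs_le_one_of_ind {t : ℝ} (h : t = 0 ∨ t = 1) : |t| ≤ 1 := by
  rcases h with h | h <;> simp [h]

lemma nonneg_of_ind {t : ℝ} (h : t = 0 ∨ t = 1) : 0 ≤ t := by
  rcases h with h | h <;> simp [h]

lemma le_one_of_ind {t : ℝ} (h : t = 0 ∨ t = 1) : t ≤ 1 := by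
  rcases h with h | h <;> simp [h]

/-- Replacing `e(z - x)` by its mean in a sum of squares. -/
lemma stepA {L : ℕ} {e : ℤ → ℝ} {η : ℝ} (he : ∀ x, 0 ≤ e x)
    (hU : Unif η L e) (f a : ℤ → ℤ → ℝ) (hf : ∀ x y, |f x y| ≤ 1) (ha : ∀ x y, |a x y| ≤ 1) :
    ∑ x ∈ seg L, ∑ z ∈ seg (2 * L), e (z - x) * (∑ y ∈ seg L, f x y * a (z - y) y) ^ 2
      ≤ mean L e * ∑ x ∈ seg L, ∑ z ∈ seg (2 * L), (∑ y ∈ seg L, f x y * a (z - y) y) ^ 2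
        + η * L ^ 4 := by
  have h1 : ∑ x ∈ seg L, ∑ z ∈ seg (2 * L), bal L e (z - x) * (∑ y ∈ seg L, f x y * a (z - y) y) ^ 2
      ≤ η * L ^ 4 := by
    calc _ = ∑ x ∈ seg L, ∑ z ∈ seg (2 * L), ∑ y ∈ seg L, ∑ y' ∈ seg L,
            (f x y * f x y') * bal L e (z - x) * (a (z - y) y * a (z - y') y') := by
          refine sum_congr rfl fun x _ => sum_congr rfl fun z _ => ?_
          rw [sq, sum_mul_sum, mul_sum]
          refine sum_congr rfl fun y _ => ?_
          rw [mul_sum]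
          exact sum_congr rfl fun y' _ => by ring
      _ = ∑ y ∈ seg L, ∑ y' ∈ seg L, ∑ x ∈ seg L, ∑ z ∈ seg (2 * L),
            (f x y * f x y') * bal L e (z - x) * (a (z - y) y * a (z - y') y') := by
          simp_rw [sum_comm (s := seg (2 * L)) (t := seg L)]
          rw [sum_comm]
          refine sum_congr rfl fun y _ => ?_
          rw [sum_comm]
      _ ≤ ∑ y ∈ seg L, ∑ y' ∈ seg L, η * L ^ 2 := by
          refine sum_le_sum fun y _ => sum_le_sum fun y' _ => ?_
          apply hU (fun x => f x y * f x y') (fun z => a (z - y) y * a (z - y') y')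
          · intro x; rw [abs_mul]; exact mul_le_one₀ (hf _ _) (abs_nonneg _) (hf _ _)
          · intro x; rw [abs_mul]; exact mul_le_one₀ (ha _ _) (abs_nonneg _) (ha _ _)
      _ = η * L ^ 4 := by
          simp only [sum_const, card_seg, nsmul_eq_mul]; ring
  refine le_trans ?_ (add_le_add_right h1 _)
  rw [mul_sum, ← sum_add_distrib]
  refine sum_le_sum fun x _ => ?_
  rw [mul_sum, ← sum_add_distrib]
  refine sum_le_sum fun z _ => ?_
  rw [← add_mul]
  exact mul_le_mul_of_nonneg_right (le_mean_add_bal he _) (sq_nonneg _)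

/-- Replacing both factors of `e(z - y) e(z - y')` by their means in a weighted sum. -/
lemma stepB {L : ℕ} (hL : 0 < L) {e : ℤ → ℝ} {η : ℝ} (he : ∀ x, e x = 0 ∨ e x = 1)
    (hs : ∀ x, x ∉ seg L → e x = 0) (hU : Unif η L e) (w : ℤ → ℤ → ℝ) (K : ℝ) (hK : 0 < K)
    (hw : ∀ x y, 0 ≤ w x y) (hwK : ∀ x y, w x y ≤ K) :
    ∑ z ∈ seg (2 * L), ∑ y ∈ seg L, ∑ y' ∈ seg L, e (z - y) * e (z - y') * w y y'
      ≤ mean L e ^ 2 * L * ∑ y ∈ seg L, ∑ y' ∈ seg L, w y y' + K * η * L ^ 3 := by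
  have he0 : ∀ x, 0 ≤ e x := fun x => nonneg_of_ind (he x)
  have h1 : ∀ y' ∈ seg L, ∑ y ∈ seg L, ∑ z ∈ seg (2 * L), w y y' * bal L e (z - y) * e (z - y')
      ≤ K * η * L ^ 2 := by
    intro y' _
    have := hU (fun y => w y y' / K) (fun z => e (z - y'))
      (fun y => by rw [abs_of_nonneg (div_nonneg (hw _ _) hK.le), div_le_one hK]; exact hwK _ _)
      (fun z => abs_le_one_of_ind (he _))
    calc _ = K * ∑ y ∈ seg L, ∑ z ∈ seg (2 * L), w y y' / K * bal L e (z - y) * e (z - y') := by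
          rw [mul_sum]
          refine sum_congr rfl fun y _ => ?_
          rw [mul_sum]
          refine sum_congr rfl fun z _ => ?_
          field_simp
      _ ≤ K * (η * L ^ 2) := by gcongr
      _ = _ := by ring
  have h2 : ∀ y' ∈ seg L, ∑ y ∈ seg L, ∑ z ∈ seg (2 * L), w y y' * mean L e * e (z - y')
      = mean L e ^ 2 * L * ∑ y ∈ seg L, w y y' := by
    intro y' hy'
    have h3 : ∑ z ∈ seg (2 * L), e (z - y') = mean L e * L := by
      rw [sum_shift L _ e y' hs, ← tot_eq hL]; rfl
      intro x hx
      simp only [seg, mem_Ico] at *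
      push_cast; omega
    rw [mul_sum]
    refine sum_congr rfl fun y _ => ?_
    rw [← mul_sum, h3]; ring
  calc _ = ∑ y' ∈ seg L, ∑ y ∈ seg L, ∑ z ∈ seg (2 * L), e (z - y) * e (z - y') * w y y' := by
        rw [sum_comm, sum_congr rfl fun y _ => sum_comm, sum_comm]
    _ ≤ ∑ y' ∈ seg L, ∑ y ∈ seg L, ∑ z ∈ seg (2 * L),
          (w y y' * mean L e * e (z - y') + w y y' * bal L e (z - y) * e (z - y')) := by
        refine sum_le_sum fun y' _ => sum_le_sum fun y _ => sum_le_sum fun z _ => ?_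
        have := le_mean_add_bal (L := L) he0 (z - y)
        have h4 := mul_le_mul_of_nonneg_right this (mul_nonneg (he0 (z - y')) (hw y y'))
        nlinarith
    _ = ∑ y' ∈ seg L, (∑ y ∈ seg L, ∑ z ∈ seg (2 * L), w y y' * mean L e * e (z - y')
          + ∑ y ∈ seg L, ∑ z ∈ seg (2 * L), w y y' * bal L e (z - y) * e (z - y')) := by
        simp_rw [sum_add_distrib]
    _ ≤ ∑ y' ∈ seg L, (mean L e ^ 2 * L * ∑ y ∈ seg L, w y y' + K * η * L ^ 2) := by
        refine sum_le_sum fun y' hy' => ?_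
        rw [h2 y' hy']
        linarith [h1 y' hy']
    _ = _ := by
        rw [sum_add_distrib, ← mul_sum, sum_comm]
        simp only [sum_const, card_seg, nsmul_eq_mul]; ring

/-- The two ways of counting the points of `a` on an antidiagonal agree. -/
lemma antidiag_eq {L : ℕ} {e₁ e₂ : ℤ → ℝ} {a : ℤ → ℤ → ℝ} (h : Conf L e₁ e₂ a) (z : ℤ) :
    ∑ x ∈ seg L, a x (z - x) = ∑ y ∈ seg L, a (z - y) y := by
  refine sum_bij_ne_zero (fun x _ _ => z - x) ?_ ?_ ?_ ?_
  · intro x hx hne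
    by_contra hc
    exact hne (h.right _ _ (h.supp₂ _ hc))
  · intro x _ _ y _ _ hxy; omega
  · intro y hy hne
    refine ⟨z - y, ?_, ?_, by omega⟩
    · by_contra hc
      exact hne (h.left _ _ (h.supp₁ _ hc))
    · rw [sub_sub_cancel]; exact hne
  · intro x _ _; rw [sub_sub_cancel]

lemma sum_antidiag {L : ℕ} {e₁ e₂ : ℤ → ℝ} {a : ℤ → ℤ → ℝ} (h : Conf L e₁ e₂ a) :
    ∑ z ∈ seg (2 * L), ∑ y ∈ seg L, a (z - y) y = tot₂ L a := by
  rw [sum_comm, tot₂, sum_comm (s := seg L) (t := seg L)]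
  refine sum_congr rfl fun y hy => ?_
  refine sum_shift L _ (fun x => a x y) y (fun x hx => h.left _ _ (h.supp₁ _ hx)) ?_
  intro x hx
  simp only [seg, mem_Ico] at *
  push_cast; omega

/-- In a corner-free configuration only degenerate corners are counted. The corner
`(x, y), (x + d, y), (x, y + d)` is parametrised by `x`, `y` and `z = x + y + d`. -/
lemma count_le {L : ℕ} {e₁ e₂ : ℤ → ℝ} {a : ℤ → ℤ → ℝ} (h : Conf L e₁ e₂ a) :
    ∑ x ∈ seg L, ∑ z ∈ seg (2 * L), a x (z - x) * ∑ y ∈ seg L, a x y * a (z - y) y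
      ≤ (L : ℝ) ^ 2 := by
  calc _ = ∑ x ∈ seg L, ∑ y ∈ seg L, ∑ z ∈ seg (2 * L), a x (z - x) * (a x y * a (z - y) y) := by
        refine sum_congr rfl fun x _ => ?_
        rw [sum_comm]
        refine sum_congr rfl fun z _ => ?_
        rw [mul_sum]
    _ ≤ ∑ x ∈ seg L, ∑ y ∈ seg L, ∑ z ∈ seg (2 * L), if z = x + y then (1 : ℝ) else 0 := by
        refine sum_le_sum fun x _ => sum_le_sum fun y _ => sum_le_sum fun z _ => ?_
        have hc := h.corner x y (z - x - y)
        rw [show x + (z - x - y) = z - y by ring, show y + (z - x - y) = z - x by ring] at hc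
        rcases h.ind x y with h1 | h1 <;> rcases h.ind (z - y) y with h2 | h2 <;>
          rcases h.ind x (z - x) with h3 | h3 <;> simp only [h1, h2, h3] <;> split_ifs <;>
          norm_num
        have := hc h1 h2 h3
        omega
    _ ≤ ∑ x ∈ seg L, ∑ y ∈ seg L, (1 : ℝ) := by
        refine sum_le_sum fun x _ => sum_le_sum fun y _ => ?_
        rw [sum_ite_eq']
        split_ifs <;> norm_num
    _ = _ := by simp only [sum_const, card_seg, nsmul_eq_mul]; ring

/-! ### Uniform sides force a large box norm -/

/-- Cauchy–Schwarz for double sums. -/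
lemma cs2 (S T : Finset ℤ) (F G : ℤ → ℤ → ℝ) :
    (∑ x ∈ S, ∑ z ∈ T, F x z * G x z) ^ 2
      ≤ (∑ x ∈ S, ∑ z ∈ T, F x z ^ 2) * ∑ x ∈ S, ∑ z ∈ T, G x z ^ 2 := by
  simp only [← sum_product']
  exact sum_mul_sq_le_sq_mul_sq _ _ _

/-- Cauchy–Schwarz for triple sums. -/
lemma cs3 (S T R : Finset ℤ) (F G : ℤ → ℤ → ℤ → ℝ) :
    (∑ x ∈ S, ∑ z ∈ T, ∑ y ∈ R, F x z y * G x z y) ^ 2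
      ≤ (∑ x ∈ S, ∑ z ∈ T, ∑ y ∈ R, F x z y ^ 2) * ∑ x ∈ S, ∑ z ∈ T, ∑ y ∈ R, G x z y ^ 2 := by
  simp only [← sum_product']
  exact sum_mul_sq_le_sq_mul_sq _ _ _

/-- The numerical content of the two applications of Cauchy–Schwarz, after normalisation. -/
lemma box_arith (δ β₁ β₂ η lam y1 y2 y3 d box : ℝ) (hδ : 0 < δ) (hδ1 : δ ≤ 1)
    (h1 : 0 < β₁) (h2 : 0 < β₂) (h1' : β₁ ≤ 1) (h2' : β₂ ≤ 1)
    (hη : η ≤ δ ^ 10 * (β₁ * β₂) ^ 6 / 8192) (hη0 : 0 ≤ η)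
    (hl : lam ≤ -(δ ^ 3 * (β₁ * β₂) ^ 2 / 4)) (hy1 : lam ^ 2 ≤ δ * (β₁ * β₂) * y1)
    (hy2 : y1 ≤ β₂ * y2 + η) (hy3 : y2 ^ 2 ≤ d * y3) (hd : d ≤ (β₁ * β₂) ^ 2 + η)
    (hy3' : y3 ≤ β₁ ^ 2 * box + η) (hy30 : 0 ≤ y3) :
    δ ^ 10 / 4096 * (β₁ * β₂) ^ 2 ≤ box := by
  set b := β₁ * β₂ with hb
  have hb0 : 0 < b := by positivity
  have hb1 : b ≤ 1 := mul_le_one₀ h1' h2.le h2'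
  have hδ5 : δ ^ 5 ≤ 1 := pow_le_one₀ hδ.le hδ1
  have hδ10 : δ ^ 10 ≤ 1 := pow_le_one₀ hδ.le hδ1
  have e1 : δ ^ 5 * b ^ 3 / 16 ≤ y1 := by
    have h3 : (δ ^ 3 * b ^ 2 / 4) ^ 2 ≤ lam ^ 2 := by
      have : 0 ≤ δ ^ 3 * b ^ 2 / 4 := by positivity
      nlinarith
    have h4 : (δ * b) * (δ ^ 5 * b ^ 3 / 16) ≤ (δ * b) * y1 := by
      refine le_trans (le_of_eq ?_) (h3.trans hy1); ring
    exact le_of_mul_le_mul_left h4 (by positivity)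
  have hb3 : b ^ 3 ≤ 1 := pow_le_one₀ hb0.le hb1
  have hη1 : η ≤ δ ^ 5 * b ^ 3 / 8192 := by
    refine hη.trans ?_
    have : δ ^ 10 * b ^ 6 ≤ δ ^ 5 * b ^ 3 := by
      have : (δ ^ 5 * b ^ 3) * (δ ^ 5 * b ^ 3) ≤ (δ ^ 5 * b ^ 3) * 1 := by
        gcongr
        exact mul_le_one₀ hδ5 (by positivity) hb3
      nlinarith
    linarith
  have e2 : δ ^ 5 * b ^ 3 / 32 ≤ β₂ * y2 := by
    have : 0 < δ ^ 5 * b ^ 3 := by positivity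
    linarith
  have e3 : (δ ^ 5 * b ^ 3 / 32) ^ 2 ≤ (β₂ * y2) ^ 2 := by gcongr
  have hη2 : η ≤ b ^ 2 := by
    refine hη.trans ?_
    have : b ^ 6 ≤ b ^ 2 := pow_le_pow_of_le_one hb0.le hb1 (by norm_num)
    have : δ ^ 10 * b ^ 6 ≤ 1 * b ^ 2 := by gcongr
    nlinarith [sq_nonneg b]
  have hd2 : d ≤ 2 * b ^ 2 := by linarith
  have e4 : (β₂ * y2) ^ 2 ≤ β₂ ^ 2 * (2 * b ^ 2 * (β₁ ^ 2 * box + η)) := by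
    rw [mul_pow]
    gcongr
    refine hy3.trans ?_
    calc d * y3 ≤ 2 * b ^ 2 * y3 := by gcongr
      _ ≤ _ := by gcongr
  have e5 : β₂ ^ 2 * (2 * b ^ 2 * (β₁ ^ 2 * box + η)) ≤ 2 * b ^ 4 * box + 2 * b ^ 2 * η := by
    have : β₂ ^ 2 * (2 * b ^ 2 * (β₁ ^ 2 * box + η)) = 2 * b ^ 4 * box + β₂ ^ 2 * (2 * b ^ 2 * η) := by
      rw [hb]; ring
    rw [this]
    have : β₂ ^ 2 ≤ 1 := pow_le_one₀ h2.le h2'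
    have h7 : 0 ≤ 2 * b ^ 2 * η := by positivity
    nlinarith
  have hb2 : b ^ 2 ≤ 1 := pow_le_one₀ hb0.le hb1
  have e6 : 2 * b ^ 2 * η ≤ δ ^ 10 * b ^ 6 / 4096 := by
    have : b ^ 2 * η ≤ 1 * η := by gcongr
    linarith
  have e7 : (2 * b ^ 4) * (δ ^ 10 / 4096 * b ^ 2) ≤ (2 * b ^ 4) * box := by
    have : 0 < δ ^ 10 * b ^ 6 := by positivity
    nlinarith
  exact le_of_mul_le_mul_left e7 (by positivity)

/-- The balanced function of `a` relative to `e₁ × e₂`. -/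
noncomputable def rel (δ : ℝ) (e₁ e₂ : ℤ → ℝ) (a : ℤ → ℤ → ℝ) (x y : ℤ) : ℝ :=
  a x y - δ * (e₁ x * e₂ y)

lemma abs_rel_le {L : ℕ} {e₁ e₂ : ℤ → ℝ} {a : ℤ → ℤ → ℝ} (h : Conf L e₁ e₂ a) {δ : ℝ}
    (h0 : 0 ≤ δ) (h1 : δ ≤ 1) (x y : ℤ) : |rel δ e₁ e₂ a x y| ≤ 1 := by
  unfold rel
  rw [abs_le]
  rcases h.ind x y with h2 | h2 <;> rcases h.ind₁ x with h3 | h3 <;>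
    rcases h.ind₂ y with h4 | h4 <;> rw [h2, h3, h4] <;> constructor <;> linarith

set_option maxHeartbeats 1000000 in
/-- A corner-free configuration with uniform sides has a balanced function with large box norm.
The count of corners is `δ` times an energy of antidiagonals, plus the sum `lam`; since the count is
at most `L ^ 2`, `lam` is very negative. Two applications of Cauchy–Schwarz, each followed by
replacing the weights `e₂`, respectively `e₁`, by their means, remove the functions `a` and leave
the box norm of `rel δ e₁ e₂ a`. -/
lemma box_large {L : ℕ} (hL : 0 < L) {e₁ e₂ : ℤ → ℝ} {a : ℤ → ℤ → ℝ} (h : Conf L e₁ e₂ a)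
    {δ η : ℝ} (hδ : 0 < δ) (hδ1 : δ ≤ 1) (ha : tot₂ L a = δ * (tot L e₁ * tot L e₂))
    (hb : 0 < mean L e₁ * mean L e₂) (hη0 : 0 ≤ η)
    (hη : η ≤ δ ^ 10 * (mean L e₁ * mean L e₂) ^ 6 / 8192)
    (hLbig : 4 ≤ δ ^ 3 * (mean L e₁ * mean L e₂) ^ 2 * L)
    (hU₁ : Unif η L e₁) (hU₂ : Unif η L e₂) :
    δ ^ 10 / 4096 * (tot L e₁ * tot L e₂) ^ 2
      ≤ ∑ y ∈ seg L, ∑ y' ∈ seg L,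
        (∑ x ∈ seg L, rel δ e₁ e₂ a x y * rel δ e₁ e₂ a x y') ^ 2 := by
  have h10 : ∀ x, 0 ≤ e₁ x := fun x => nonneg_of_ind (h.ind₁ x)
  have h20 : ∀ x, 0 ≤ e₂ x := fun x => nonneg_of_ind (h.ind₂ x)
  have ha0 : ∀ x y, 0 ≤ a x y := fun x y => nonneg_of_ind (h.ind x y)
  have ha1 : ∀ x y, |a x y| ≤ 1 := fun x y => abs_le_one_of_ind (h.ind x y)
  have hasq : ∀ x y, a x y ^ 2 = a x y := fun x y => by rcases h.ind x y with h | h <;> simp [h]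
  have hae1 : ∀ x y, a x y * e₁ x = a x y := fun x y => by
    rcases h.ind₁ x with h' | h'
    · rw [h.left x y h', zero_mul]
    · rw [h', mul_one]
  have hae2 : ∀ x y, a x y * e₂ y = a x y := fun x y => by
    rcases h.ind₂ y with h' | h'
    · rw [h.right x y h', zero_mul]
    · rw [h', mul_one]
  have hm1 := mean_nonneg (L := L) h10
  have hm2 := mean_nonneg (L := L) h20
  have hb1 : 0 < mean L e₁ := lt_of_le_of_ne hm1 (by rintro h; rw [← h] at hb; simp at hb)
  have hb2 : 0 < mean L e₂ := lt_of_le_of_ne hm2 (by rintro h; rw [← h] at hb; simp at hb)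
  have hm1' := mean_le_one hL (fun x => le_one_of_ind (h.ind₁ x))
  have hm2' := mean_le_one hL (fun x => le_one_of_ind (h.ind₂ x))
  have ht1 := tot_eq hL e₁
  have ht2 := tot_eq hL e₂
  set β₁ := mean L e₁ with hβ₁
  set β₂ := mean L e₂ with hβ₂
  set f := rel δ e₁ e₂ a with hf
  have hf1 : ∀ x y, |f x y| ≤ 1 := abs_rel_le h hδ.le hδ1
  have hLr : (0 : ℝ) < L := by positivity
  set S : ℤ → ℝ := fun z => ∑ y ∈ seg L, a (z - y) y with hS
  set G : ℤ → ℤ → ℝ := fun x z => ∑ y ∈ seg L, f x y * a (z - y) y with hG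
  set D : ℝ := ∑ z ∈ seg (2 * L), S z ^ 2 with hD
  set lam : ℝ := ∑ x ∈ seg L, ∑ z ∈ seg (2 * L), a x (z - x) * G x z with hlam
  set W : ℤ → ℤ → ℝ := fun y y' => ∑ x ∈ seg L, f x y * f x y' with hW
  set Y1 : ℝ := ∑ x ∈ seg L, ∑ z ∈ seg (2 * L), e₂ (z - x) * G x z ^ 2 with hY1
  set Y2 : ℝ := ∑ x ∈ seg L, ∑ z ∈ seg (2 * L), G x z ^ 2 with hY2
  set Y3 : ℝ := ∑ z ∈ seg (2 * L), ∑ y ∈ seg L, ∑ y' ∈ seg L,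
    e₁ (z - y) * e₁ (z - y') * W y y' ^ 2 with hY3
  set box : ℝ := ∑ y ∈ seg L, ∑ y' ∈ seg L, W y y' ^ 2 with hbox
  have hlamD : lam ≤ L ^ 2 - δ * D := by
    have e : lam = ∑ x ∈ seg L, ∑ z ∈ seg (2 * L), a x (z - x) * ∑ y ∈ seg L, a x y * a (z - y) y
        - δ * D := by
      have : D = ∑ x ∈ seg L, ∑ z ∈ seg (2 * L), a x (z - x) * S z := by
        rw [sum_comm]
        refine sum_congr rfl fun z _ => ?_
        rw [← sum_mul, antidiag_eq h, sq]
      rw [this, mul_sum, ← sum_sub_distrib]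
      refine sum_congr rfl fun x _ => ?_
      rw [mul_sum, ← sum_sub_distrib]
      refine sum_congr rfl fun z _ => ?_
      simp only [hG, hS, mul_sum]
      rw [← sum_sub_distrib]
      refine sum_congr rfl fun y _ => ?_
      simp only [hf, rel]
      have k1 := hae1 x (z - x)
      have k2 := hae2 (z - y) y
      calc _ = a x (z - x) * (a x y * a (z - y) y)
            - δ * ((a x (z - x) * e₁ x) * (a (z - y) y * e₂ y)) := by ring
        _ = _ := by rw [k1, k2]
    rw [e]
    linarith [count_le h]
  have hDlow : tot₂ L a ^ 2 ≤ 2 * L * D := by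
    rw [← sum_antidiag h]
    have := sq_sum_le_card_mul_sum_sq (s := seg (2 * L)) (f := S)
    rw [card_seg] at this
    push_cast at this
    exact this
  have htot : tot₂ L a = δ * (β₁ * β₂) * L ^ 2 := by rw [ha, ht1, ht2]; ring
  -- Cauchy–Schwarz in `x, z`, eliminating the factor `a x (z - x)`
  have hcs1 : lam ^ 2 ≤ tot₂ L a * Y1 := by
    have e1 : lam = ∑ x ∈ seg L, ∑ z ∈ seg (2 * L), a x (z - x) * (e₂ (z - x) * G x z) := by
      refine sum_congr rfl fun x _ => sum_congr rfl fun z _ => ?_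
      rw [← mul_assoc, hae2]
    have e2 : ∑ x ∈ seg L, ∑ z ∈ seg (2 * L), a x (z - x) ^ 2 = tot₂ L a := by
      simp only [hasq]
      rw [sum_comm, ← sum_antidiag h]
      exact sum_congr rfl fun z _ => antidiag_eq h z
    have e3 : ∑ x ∈ seg L, ∑ z ∈ seg (2 * L), (e₂ (z - x) * G x z) ^ 2 = Y1 := by
      refine sum_congr rfl fun x _ => sum_congr rfl fun z _ => ?_
      rw [mul_pow]
      congr 1
      rcases h.ind₂ (z - x) with h' | h' <;> simp [h']
    rw [e1, ← e2, ← e3]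
    exact cs2 _ _ _ _
  have hY12 : Y1 ≤ β₂ * Y2 + η * L ^ 4 := stepA h20 hU₂ f a hf1 ha1
  -- Cauchy–Schwarz in `z, y, y'`, eliminating `a (z - y) y * a (z - y') y'`
  have hcs2 : Y2 ^ 2 ≤ D * Y3 := by
    have e1 : Y2 = ∑ z ∈ seg (2 * L), ∑ y ∈ seg L, ∑ y' ∈ seg L,
        (a (z - y) y * a (z - y') y') * (e₁ (z - y) * e₁ (z - y') * W y y') := by
      rw [hY2, sum_comm]
      refine sum_congr rfl fun z _ => ?_
      simp only [hG, hW, sq, sum_mul_sum]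
      simp only [mul_sum]
      rw [sum_comm]
      refine sum_congr rfl fun y _ => ?_
      rw [sum_comm]
      refine sum_congr rfl fun y' _ => sum_congr rfl fun x _ => ?_
      have k1 := hae1 (z - y) y
      have k2 := hae1 (z - y') y'
      calc _ = (a (z - y) y) * (a (z - y') y') * (f x y * f x y') := by ring
        _ = (a (z - y) y * e₁ (z - y)) * (a (z - y') y' * e₁ (z - y')) * (f x y * f x y') := by
          rw [k1, k2]
        _ = _ := by ring
    have e2 : D = ∑ z ∈ seg (2 * L), ∑ y ∈ seg L, ∑ y' ∈ seg L,
        (a (z - y) y * a (z - y') y') ^ 2 := by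
      refine sum_congr rfl fun z _ => ?_
      simp only [hS, sq, sum_mul_sum]
      refine sum_congr rfl fun y _ => sum_congr rfl fun y' _ => ?_
      have k1 := hasq (z - y) y
      have k2 := hasq (z - y') y'
      rw [← sq, mul_pow, k1, k2]
    have e3 : Y3 = ∑ z ∈ seg (2 * L), ∑ y ∈ seg L, ∑ y' ∈ seg L,
        (e₁ (z - y) * e₁ (z - y') * W y y') ^ 2 := by
      refine sum_congr rfl fun z _ => sum_congr rfl fun y _ => sum_congr rfl fun y' _ => ?_
      rcases h.ind₁ (z - y) with h' | h' <;> rcases h.ind₁ (z - y') with h'' | h'' <;>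
        simp [h', h'']
    rw [e1, e2, e3]
    exact cs3 _ _ _ _ _
  have hWle : ∀ y y', |W y y'| ≤ L := by
    intro y y'
    calc |W y y'| ≤ ∑ x ∈ seg L, |f x y * f x y'| := abs_sum_le_sum_abs _ _
      _ ≤ ∑ x ∈ seg L, 1 := sum_le_sum fun x _ => by
          rw [abs_mul]; exact mul_le_one₀ (hf1 _ _) (abs_nonneg _) (hf1 _ _)
      _ = L := by simp
  have hY3le : Y3 ≤ β₁ ^ 2 * L * box + L ^ 2 * η * L ^ 3 :=
    stepB hL h.ind₁ h.supp₁ hU₁ (fun y y' => W y y' ^ 2) (L ^ 2) (by positivity)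
      (fun _ _ => sq_nonneg _) (fun y y' => by
        rw [← sq_abs]; gcongr; exact hWle y y')
  have hDle : D ≤ β₁ ^ 2 * L * (β₂ * L) ^ 2 + 1 * η * L ^ 3 := by
    have := stepB hL h.ind₁ h.supp₁ hU₁ (fun y y' => e₂ y * e₂ y') 1 one_pos
      (fun _ _ => mul_nonneg (h20 _) (h20 _))
      (fun y y' => mul_le_one₀ (le_one_of_ind (h.ind₂ y)) (h20 _) (le_one_of_ind (h.ind₂ y')))
    rw [← sum_mul_sum, ← sq] at this
    have e : ∑ y ∈ seg L, e₂ y = β₂ * L := ht2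
    rw [e] at this
    refine le_trans (sum_le_sum fun z _ => ?_) this
    simp only [hS, sq, sum_mul_sum]
    refine sum_le_sum fun y _ => sum_le_sum fun y' _ => ?_
    have k : ∀ x y, a x y ≤ e₁ x * e₂ y := by
      intro x y
      rw [← hae2, ← hae1]
      have := mul_le_mul_of_nonneg_right (le_one_of_ind (h.ind x y))
        (mul_nonneg (h10 x) (h20 y))
      linarith
    calc a (z - y) y * a (z - y') y' ≤ (e₁ (z - y) * e₂ y) * (e₁ (z - y') * e₂ y') :=
          mul_le_mul (k _ _) (k _ _) (ha0 _ _) (mul_nonneg (h10 _) (h20 _))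
      _ = _ := by ring
  have hY30 : 0 ≤ Y3 := sum_nonneg fun z _ => sum_nonneg fun y _ => sum_nonneg fun y' _ =>
    mul_nonneg (mul_nonneg (h10 _) (h10 _)) (sq_nonneg _)
  have hlam2 : lam ≤ -(δ ^ 3 * (β₁ * β₂) ^ 2 / 4 * L ^ 3) := by
    have k1 : δ ^ 2 * (β₁ * β₂) ^ 2 * L ^ 3 ≤ 2 * D := by
      have : L * (δ ^ 2 * (β₁ * β₂) ^ 2 * L ^ 3) ≤ (L : ℝ) * (2 * D) := by
        rw [htot] at hDlow
        linarith
      exact le_of_mul_le_mul_left this hLr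
    have k2 : (4 : ℝ) * L ^ 2 ≤ δ ^ 3 * (β₁ * β₂) ^ 2 * L ^ 3 := by
      calc (4 : ℝ) * L ^ 2 ≤ (δ ^ 3 * (β₁ * β₂) ^ 2 * L) * L ^ 2 := by gcongr
        _ = _ := by ring
    have k3 := mul_le_mul_of_nonneg_left k1 hδ.le
    nlinarith
  clear_value Y1 Y2 Y3 D lam box
  have hfin := box_arith δ β₁ β₂ η (lam / L ^ 3) (Y1 / L ^ 4) (Y2 / L ^ 4) (Y3 / L ^ 5) (D / L ^ 3)
    (box / L ^ 4) hδ hδ1 hb1 hb2 hm1' hm2' hη hη0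
    (by rw [div_le_iff₀ (by positivity)]; linarith)
    (by
      rw [htot] at hcs1
      rw [div_pow, div_le_iff₀ (by positivity)]
      refine hcs1.trans (le_of_eq ?_)
      field_simp)
    (by
      rw [div_le_iff₀ (by positivity)]
      refine hY12.trans (le_of_eq ?_)
      field_simp)
    (by
      rw [div_pow, div_le_iff₀ (by positivity)]
      refine hcs2.trans (le_of_eq ?_)
      field_simp)
    (by
      rw [div_le_iff₀ (by positivity)]
      refine hDle.trans (le_of_eq ?_)
      ring)
    (by
      rw [div_le_iff₀ (by positivity)]
      refine hY3le.trans (le_of_eq ?_)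
      field_simp)
    (div_nonneg hY30 (by positivity))
  rw [le_div_iff₀ (by positivity)] at hfin
  rw [ht1, ht2]
  refine le_trans (le_of_eq ?_) hfin
  ring

/-! ### From the box norm to a density increment -/

/-- The total of `f` over the rectangle with sides `u` and `v`. -/
noncomputable def rect (L : ℕ) (f : ℤ → ℤ → ℝ) (u v : ℤ → ℝ) : ℝ :=
  ∑ x ∈ seg L, ∑ y ∈ seg L, f x y * (u x * v y)

lemma rect_sub_left (L : ℕ) (f : ℤ → ℤ → ℝ) (u u' v : ℤ → ℝ) :
    rect L f (fun x => u x - u' x) v = rect L f u v - rect L f u' v := by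
  simp only [rect, ← sum_sub_distrib]
  exact sum_congr rfl fun x _ => sum_congr rfl fun y _ => by ring

lemma rect_sub_right (L : ℕ) (f : ℤ → ℤ → ℝ) (u v v' : ℤ → ℝ) :
    rect L f u (fun y => v y - v' y) = rect L f u v - rect L f u v' := by
  simp only [rect, ← sum_sub_distrib]
  exact sum_congr rfl fun x _ => sum_congr rfl fun y _ => by ring

lemma rect_smul_left (L : ℕ) (f : ℤ → ℤ → ℝ) (c : ℝ) (u v : ℤ → ℝ) :
    rect L f (fun x => c * u x) v = c * rect L f u v := by
  simp only [rect, mul_sum]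
  exact sum_congr rfl fun x _ => sum_congr rfl fun y _ => by ring

lemma rect_smul_right (L : ℕ) (f : ℤ → ℤ → ℝ) (c : ℝ) (u v : ℤ → ℝ) :
    rect L f u (fun x => c * v x) = c * rect L f u v := by
  simp only [rect, mul_sum]
  exact sum_congr rfl fun x _ => sum_congr rfl fun y _ => by ring

/-- `u` is the indicator function of a subset of the set with indicator function `e`. -/
def SubInd (u e : ℤ → ℝ) : Prop := ∀ x, (u x = 0 ∨ u x = 1) ∧ (e x = 0 → u x = 0)

lemma SubInd.compl {u e : ℤ → ℝ} (he : ∀ x, e x = 0 ∨ e x = 1) (h : SubInd u e) :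
    SubInd (fun x => e x - u x) e := by
  intro x
  rcases he x with h1 | h1 <;> rcases (h x).1 with h2 | h2 <;> simp [h1, h2]
  have := (h x).2 h1
  rw [h2] at this; norm_num at this

lemma SubInd.refl' {e : ℤ → ℝ} (he : ∀ x, e x = 0 ∨ e x = 1) : SubInd e e := fun x => ⟨he x, id⟩

/-- If `f` has total zero and no rectangle sum exceeds `m`, then no rectangle sum is below `-3 m`:
the complement of a rectangle is a union of three rectangles. -/
lemma abs_rect_le {L : ℕ} {e₁ e₂ : ℤ → ℝ} (h₁ : ∀ x, e₁ x = 0 ∨ e₁ x = 1)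
    (h₂ : ∀ x, e₂ x = 0 ∨ e₂ x = 1) (f : ℤ → ℤ → ℝ) (h0 : rect L f e₁ e₂ = 0) {m : ℝ}
    (hm0 : 0 ≤ m) (hm : ∀ u v, SubInd u e₁ → SubInd v e₂ → rect L f u v ≤ m) {u v : ℤ → ℝ}
    (hu : SubInd u e₁) (hv : SubInd v e₂) : |rect L f u v| ≤ 3 * m := by
  have k0 := hm u v hu hv
  have k1 := hm _ v (hu.compl h₁) hv
  have k2 := hm u _ hu (hv.compl h₂)
  have k3 := hm _ _ (hu.compl h₁) (hv.compl h₂)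
  rw [rect_sub_left] at k1
  rw [rect_sub_right] at k2
  rw [rect_sub_left, rect_sub_right, rect_sub_right] at k3
  rw [abs_le]
  constructor <;> linarith

/-- A large box norm produces a rectangle on which `a` is denser than average. The box norm is an
average over `x', y'` of correlations of the balanced function with a product of a function of `x`
and a function of `y`; these are combinations of indicator functions of sections of `A`, so some
rectangle has a large sum in absolute value. The total of the balanced function being zero, some
rectangle has a large positive sum. -/
lemma exists_rect {L : ℕ} {e₁ e₂ : ℤ → ℝ} {a : ℤ → ℤ → ℝ} (h : Conf L e₁ e₂ a)
    {δ ε : ℝ} (hδ : 0 ≤ δ) (hδ1 : δ ≤ 1) (hε : 0 < ε)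
    (ha : tot₂ L a = δ * (tot L e₁ * tot L e₂)) (ht : 0 < tot L e₁ * tot L e₂)
    (hbox : ε * (tot L e₁ * tot L e₂) ^ 2 ≤ ∑ y ∈ seg L, ∑ y' ∈ seg L,
        (∑ x ∈ seg L, rel δ e₁ e₂ a x y * rel δ e₁ e₂ a x y') ^ 2) :
    ∃ u v, SubInd u e₁ ∧ SubInd v e₂ ∧
      ε / 18 * (tot L e₁ * tot L e₂) ≤ rect L (rel δ e₁ e₂ a) u v := by
  by_contra! hcon
  set f := rel δ e₁ e₂ a with hf
  set t := tot L e₁ * tot L e₂ with htdef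
  have hesq1 : ∀ x, e₁ x * e₁ x = e₁ x := fun x => by rcases h.ind₁ x with h | h <;> simp [h]
  have hesq2 : ∀ x, e₂ x * e₂ x = e₂ x := fun x => by rcases h.ind₂ x with h | h <;> simp [h]
  have h0 : rect L f e₁ e₂ = 0 := by
    have e : rect L f e₁ e₂ = tot₂ L a - δ * t := by
      rw [htdef, tot, tot, sum_mul_sum, tot₂, rect, mul_sum, ← sum_sub_distrib]
      refine sum_congr rfl fun x _ => ?_
      rw [mul_sum, ← sum_sub_distrib]
      refine sum_congr rfl fun y _ => ?_
      simp only [hf, rel]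
      have k : a x y * (e₁ x * e₂ y) = a x y := by
        rcases h.ind₁ x with h1 | h1
        · rw [h.left x y h1, zero_mul]
        · rcases h.ind₂ y with h2 | h2
          · rw [h.right x y h2, zero_mul]
          · rw [h1, h2]; ring
      calc _ = a x y * (e₁ x * e₂ y) - δ * ((e₁ x * e₁ x) * (e₂ y * e₂ y)) := by ring
        _ = _ := by rw [k, hesq1, hesq2]
    rw [e, ha, sub_self]
  have hm0 : 0 ≤ ε / 18 * t := by positivity
  have habs : ∀ u v, SubInd u e₁ → SubInd v e₂ → |rect L f u v| ≤ 3 * (ε / 18 * t) := fun u v hu hv =>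
    abs_rect_le h.ind₁ h.ind₂ f h0 hm0 (fun u v hu hv => (hcon u v hu hv).le) hu hv
  have hR : ∀ x' y', |rect L f (fun x => f x y') (fun y => f x' y)| ≤ ε / 2 * t := by
    intro x' y'
    have hu : SubInd (fun x => a x y') e₁ := fun x => ⟨h.ind x y', h.left x y'⟩
    have hv : SubInd (fun y => a x' y) e₂ := fun y => ⟨h.ind x' y, h.right x' y⟩
    have e : rect L f (fun x => f x y') (fun y => f x' y)
        = rect L f (fun x => a x y') (fun y => a x' y)
          - δ * e₁ x' * rect L f (fun x => a x y') e₂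
          - δ * e₂ y' * rect L f e₁ (fun y => a x' y) := by
      have k1 : (fun x => f x y') = fun x => a x y' - (δ * e₂ y') * e₁ x := by
        funext x; simp only [hf, rel]; ring
      have k2 : (fun y => f x' y) = fun y => a x' y - (δ * e₁ x') * e₂ y := by
        funext x; simp only [hf, rel]; ring
      rw [k1, k2, rect_sub_left, rect_sub_right, rect_sub_right, rect_smul_left, rect_smul_left,
        rect_smul_right, rect_smul_right, h0]
      ring
    rw [e]
    have a1 := habs _ _ hu hv
    have a2 := habs _ _ hu (SubInd.refl' h.ind₂)
    have a3 := habs _ _ (SubInd.refl' h.ind₁) hv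
    have b1 : |δ * e₁ x'| ≤ 1 := by
      rw [abs_mul]; exact mul_le_one₀ (by rwa [abs_of_nonneg hδ]) (abs_nonneg _)
        (abs_le_one_of_ind (h.ind₁ _))
    have b2 : |δ * e₂ y'| ≤ 1 := by
      rw [abs_mul]; exact mul_le_one₀ (by rwa [abs_of_nonneg hδ]) (abs_nonneg _)
        (abs_le_one_of_ind (h.ind₂ _))
    have c1 := abs_mul (δ * e₁ x') (rect L f (fun x => a x y') e₂)
    have c2 := abs_mul (δ * e₂ y') (rect L f e₁ (fun y => a x' y))
    have d1 := mul_le_mul b1 a2 (abs_nonneg _) zero_le_one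
    have d2 := mul_le_mul b2 a3 (abs_nonneg _) zero_le_one
    have s1 := abs_sub (rect L f (fun x => a x y') (fun y => a x' y)
          - δ * e₁ x' * rect L f (fun x => a x y') e₂) (δ * e₂ y' * rect L f e₁ (fun y => a x' y))
    have s2 := abs_sub (rect L f (fun x => a x y') (fun y => a x' y))
          (δ * e₁ x' * rect L f (fun x => a x y') e₂)
    linarith
  have hfe : ∀ x y, |f x y| ≤ e₁ x * e₂ y := by
    intro x y
    rcases h.ind₁ x with h1 | h1
    · simp [hf, rel, h1, h.left x y h1]
    · rcases h.ind₂ y with h2 | h2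
      · simp [hf, rel, h2, h.right x y h2]
      · rw [h1, h2, one_mul]; exact abs_rel_le h hδ hδ1 x y
  have hB : ∑ y ∈ seg L, ∑ y' ∈ seg L, (∑ x ∈ seg L, f x y * f x y') ^ 2 ≤ ε / 2 * t * t := by
    calc _ = ∑ x' ∈ seg L, ∑ y' ∈ seg L,
            f x' y' * rect L f (fun x => f x y') (fun y => f x' y) := by
          simp only [rect, sq, sum_mul_sum]
          simp only [mul_sum]
          rw [sum_comm]
          conv_rhs => rw [sum_comm]
          refine sum_congr rfl fun y' _ => ?_
          rw [sum_comm]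
          rw [sum_comm, sum_congr rfl fun y _ => sum_comm, sum_comm]
          refine sum_congr rfl fun x' _ => ?_
          rw [sum_comm]
          exact sum_congr rfl fun x _ => sum_congr rfl fun y _ => by ring
      _ ≤ ∑ x' ∈ seg L, ∑ y' ∈ seg L, ε / 2 * t * (e₁ x' * e₂ y') := by
          refine sum_le_sum fun x' _ => sum_le_sum fun y' _ => ?_
          refine (le_abs_self _).trans ?_
          rw [abs_mul, mul_comm]
          exact mul_le_mul (hR _ _) (hfe _ _) (abs_nonneg _) (by positivity)
      _ = ε / 2 * t * t := by
          simp_rw [← mul_sum]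
          rw [htdef, tot, tot, sum_mul_sum]
          simp_rw [← mul_sum]
  have : 0 < ε * (t * t) := by positivity
  nlinarith

/-- The density increment obtained when both sides are uniform. Keeping a multiple of `s * L ^ 2` in
the conclusion prevents the new sides from being too small. -/
lemma increment {L : ℕ} (hL : 0 < L) {e₁ e₂ : ℤ → ℝ} {a : ℤ → ℤ → ℝ} (h : Conf L e₁ e₂ a)
    {δ₀ δ s η : ℝ} (hδ₀ : 0 < δ₀) (hδ : δ₀ ≤ δ) (hs : 0 < s)
    (ha : δ * (tot L e₁ * tot L e₂) + s * L ^ 2 ≤ tot₂ L a) (hη0 : 0 ≤ η)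
    (hη : η ≤ δ₀ ^ 10 * s ^ 6 / 8192) (hLbig : 4 ≤ δ₀ ^ 3 * s ^ 2 * L)
    (hU₁ : Unif η L e₁) (hU₂ : Unif η L e₂) :
    ∃ u v b, Conf L u v b ∧
      (δ + δ₀ ^ 10 / 147456) * (tot L u * tot L v) + δ₀ ^ 10 / 147456 * s * L ^ 2 ≤ tot₂ L b := by
  have h10 : ∀ x, 0 ≤ e₁ x := fun x => nonneg_of_ind (h.ind₁ x)
  have h20 : ∀ x, 0 ≤ e₂ x := fun x => nonneg_of_ind (h.ind₂ x)
  have hLr : (0 : ℝ) < L := by positivity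
  have hale : ∀ x y, a x y ≤ e₁ x * e₂ y := by
    intro x y
    rcases h.ind₁ x with h1 | h1
    · rw [h.left x y h1, h1, zero_mul]
    · rcases h.ind₂ y with h2 | h2
      · rw [h.right x y h2, h2, mul_zero]
      · rw [h1, h2, one_mul]; exact le_one_of_ind (h.ind x y)
  set t := tot L e₁ * tot L e₂ with htdef
  have hat : tot₂ L a ≤ t := by
    rw [htdef, tot, tot, sum_mul_sum]
    exact sum_le_sum fun x _ => sum_le_sum fun y _ => hale x y
  have ht0 : 0 ≤ t := mul_nonneg (sum_nonneg fun x _ => h10 x) (sum_nonneg fun x _ => h20 x)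
  have hδpos : 0 < δ := lt_of_lt_of_le hδ₀ hδ
  have hsL : 0 < s * L ^ 2 := by positivity
  have ht : s * L ^ 2 ≤ t := by
    have : 0 ≤ δ * t := by positivity
    linarith
  have htpos : 0 < t := by linarith
  -- the exact relative density
  set d := tot₂ L a / t with hd
  have had : tot₂ L a = d * t := by rw [hd]; field_simp
  have hd1 : d ≤ 1 := by rw [hd, div_le_one htpos]; exact hat
  have hδd : δ ≤ d := by
    rw [hd, le_div_iff₀ htpos]; linarith
  have hd0 : 0 < d := by linarith
  have hmm : mean L e₁ * mean L e₂ = t / L ^ 2 := by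
    unfold mean; rw [htdef]; field_simp
  have hsm : s ≤ mean L e₁ * mean L e₂ := by
    rw [hmm, le_div_iff₀ (by positivity)]; exact ht
  have hδ₀d : δ₀ ≤ d := hδ.trans hδd
  have hbox := box_large hL h hd0 hd1 (had.trans (by rw [htdef])) (by linarith) hη0
    (hη.trans (by gcongr)) (hLbig.trans (by gcongr)) hU₁ hU₂
  obtain ⟨u, v, hu, hv, huv⟩ := exists_rect h hd0.le hd1 (by positivity) had htpos hbox
  refine ⟨u, v, fun x y => a x y * (u x * v y), ⟨fun x => (hu x).1, fun x => (hv x).1, ?_,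
    fun x hx => (hu x).2 (h.supp₁ x hx), fun x hx => (hv x).2 (h.supp₂ x hx), ?_, ?_, ?_⟩, ?_⟩
  · intro x y
    rcases h.ind x y with h1 | h1 <;> rcases (hu x).1 with h2 | h2 <;>
      rcases (hv y).1 with h3 | h3 <;> simp [h1, h2, h3]
  · intro x y hx; simp [hx]
  · intro x y hx; simp [hx]
  · have k : ∀ x y, a x y * (u x * v y) = 1 → a x y = 1 := by
      intro x y hxy
      rcases h.ind x y with h1 | h1
      · rw [h1, zero_mul] at hxy; norm_num at hxy
      · exact h1
    intro x y d h1 h2 h3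
    exact h.corner x y d (k _ _ h1) (k _ _ h2) (k _ _ h3)
  · have hue : ∀ x, e₁ x * u x = u x := fun x => by
      rcases h.ind₁ x with h1 | h1
      · rw [(hu x).2 h1, mul_zero]
      · rw [h1, one_mul]
    have hve : ∀ x, e₂ x * v x = v x := fun x => by
      rcases h.ind₂ x with h1 | h1
      · rw [(hv x).2 h1, mul_zero]
      · rw [h1, one_mul]
    have e : rect L (rel d e₁ e₂ a) u v
        = tot₂ L (fun x y => a x y * (u x * v y)) - d * (tot L u * tot L v) := by
      rw [tot, tot, sum_mul_sum, tot₂, rect, mul_sum, ← sum_sub_distrib]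
      refine sum_congr rfl fun x _ => ?_
      rw [mul_sum, ← sum_sub_distrib]
      refine sum_congr rfl fun y _ => ?_
      simp only [rel]
      calc _ = a x y * (u x * v y) - d * ((e₁ x * u x) * (e₂ y * v y)) := by ring
        _ = _ := by rw [hue, hve]
    rw [e] at huv
    have hule : tot L u ≤ tot L e₁ := sum_le_sum fun x _ => by
      rcases h.ind₁ x with h1 | h1
      · rw [(hu x).2 h1, h1]
      · rw [h1]; exact le_one_of_ind (hu x).1
    have hvle : tot L v ≤ tot L e₂ := sum_le_sum fun x _ => by
      rcases h.ind₂ x with h1 | h1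
      · rw [(hv x).2 h1, h1]
      · rw [h1]; exact le_one_of_ind (hv x).1
    have hu0 : 0 ≤ tot L u := sum_nonneg fun x _ => nonneg_of_ind (hu x).1
    have hv0 : 0 ≤ tot L v := sum_nonneg fun x _ => nonneg_of_ind (hv x).1
    have huvle : tot L u * tot L v ≤ t := mul_le_mul hule hvle hv0 (hu0.trans hule)
    have huv0 : 0 ≤ tot L u * tot L v := mul_nonneg hu0 hv0
    have k1 : δ * (tot L u * tot L v) ≤ d * (tot L u * tot L v) := by gcongr
    have k2 : δ₀ ^ 10 / 147456 * (tot L u * tot L v) ≤ δ₀ ^ 10 / 147456 * t := by gcongr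
    have k3 : δ₀ ^ 10 / 147456 * (s * L ^ 2) ≤ δ₀ ^ 10 / 147456 * t := by gcongr
    have k4 : δ₀ ^ 10 / 4096 / 18 * t ≤ d ^ 10 / 4096 / 18 * t := by gcongr
    nlinarith

/-! ### Restriction to progressions -/

/-- Restriction of `e` to the progression `s, s + q, …, s + (M - 1) q`, rescaled to `[0, M)`. -/
noncomputable def res (M : ℕ) (q s : ℤ) (e : ℤ → ℝ) (i : ℤ) : ℝ :=
  if i ∈ seg M then e (s + q * i) else 0

/-- The two-dimensional version of `res`, for the progressions starting at `s` and `t` with common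
difference `q`. -/
noncomputable def res₂ (M : ℕ) (q s t : ℤ) (a : ℤ → ℤ → ℝ) (i j : ℤ) : ℝ :=
  if i ∈ seg M ∧ j ∈ seg M then a (s + q * i) (t + q * j) else 0

lemma Conf.res {L : ℕ} {e₁ e₂ : ℤ → ℝ} {a : ℤ → ℤ → ℝ} (h : Conf L e₁ e₂ a) (M : ℕ) {q : ℤ}
    (hq : 0 < q) (s t : ℤ) : Conf M (res M q s e₁) (res M q t e₂) (res₂ M q s t a) := by
  refine ⟨?_, ?_, ?_, ?_, ?_, ?_, ?_, ?_⟩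
  · intro x; unfold _root_.res; split_ifs
    · exact h.ind₁ _
    · exact Or.inl rfl
  · intro x; unfold _root_.res; split_ifs
    · exact h.ind₂ _
    · exact Or.inl rfl
  · intro x y; unfold res₂; split_ifs
    · exact h.ind _ _
    · exact Or.inl rfl
  · intro x hx; simp only [_root_.res, if_neg hx]
  · intro x hx; simp only [_root_.res, if_neg hx]
  · intro x y hx; unfold res₂; unfold _root_.res at hx
    split_ifs with h1
    · rw [if_pos h1.1] at hx; exact h.left _ _ hx
    · rfl
  · intro x y hx; unfold res₂; unfold _root_.res at hx
    split_ifs with h1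
    · rw [if_pos h1.2] at hx; exact h.right _ _ hx
    · rfl
  · intro x y d h1 h2 h3
    unfold res₂ at h1 h2 h3
    split_ifs at h1 h2 h3
    · rw [mul_add, ← add_assoc] at h2 h3
      have := h.corner _ _ _ h1 h2 h3
      rcases mul_eq_zero.1 this with h4 | h4
      · omega
      · exact h4
    all_goals first | (norm_num at h1; done) | (norm_num at h2; done) | norm_num at h3

lemma tot_res (M : ℕ) (q s : ℤ) (e : ℤ → ℝ) :
    tot M (res M q s e) = ∑ i ∈ seg M, e (s + q * i) :=
  sum_congr rfl fun i hi => by simp only [res, if_pos hi]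

lemma tot₂_res (M : ℕ) (q s t : ℤ) (a : ℤ → ℤ → ℝ) :
    tot₂ M (res₂ M q s t a) = ∑ i ∈ seg M, ∑ j ∈ seg M, a (s + q * i) (t + q * j) :=
  sum_congr rfl fun i hi => sum_congr rfl fun j hj => by simp only [res₂, if_pos (And.intro hi hj)]

/-- A range of starting points that contains those of all progressions of length `M` and difference
`q` meeting `[0, L)`. -/
noncomputable abbrev starts (L M : ℕ) (q : ℤ) : Finset ℤ := Finset.Ico (-(q * M)) (L : ℤ)

lemma card_starts (L M : ℕ) {q : ℤ} (hq : 0 < q) :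
    ((starts L M q).card : ℝ) = L + q * M := by
  rw [Int.card_Ico]
  have : (0 : ℤ) ≤ L - -(q * M) := by
    have : 0 ≤ q * M := by positivity
    omega
  have h2 : (((L - -(q * M) : ℤ).toNat : ℤ) : ℝ) = ((L - -(q * M) : ℤ) : ℝ) := by
    rw [Int.toNat_of_nonneg this]
  rw [Int.cast_natCast] at h2
  rw [h2]; push_cast; ring

lemma sum_starts {R : Type*} [AddCommMonoid R] (L M : ℕ) {q : ℤ} (hq : 0 < q) (h : ℤ → R)
    (hs : ∀ x, x ∉ seg L → h x = 0) {i : ℤ} (hi : i ∈ seg M) :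
    ∑ s ∈ starts L M q, h (s + q * i) = ∑ x ∈ seg L, h x := by
  have := sum_shift L (starts L M q) h (-(q * i)) hs (by
    intro x hx
    simp only [seg, starts, mem_Ico] at *
    constructor
    · nlinarith
    · nlinarith)
  simpa only [sub_neg_eq_add] using this

lemma sum_tot_res (L M : ℕ) {q : ℤ} (hq : 0 < q) (e : ℤ → ℝ) (hs : ∀ x, x ∉ seg L → e x = 0) :
    ∑ s ∈ starts L M q, tot M (res M q s e) = M * tot L e := by
  simp_rw [tot_res]
  rw [sum_comm, sum_congr rfl fun i hi => sum_starts L M hq e hs hi]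
  simp [tot]

lemma sum_tot₂_res (L M : ℕ) {q : ℤ} (hq : 0 < q) (a : ℤ → ℤ → ℝ)
    (hs : ∀ x y, x ∉ seg L → a x y = 0) (hs' : ∀ x y, y ∉ seg L → a x y = 0) :
    ∑ s ∈ starts L M q, ∑ t ∈ starts L M q, tot₂ M (res₂ M q s t a) = M ^ 2 * tot₂ L a := by
  simp_rw [tot₂_res]
  calc _ = ∑ i ∈ seg M, ∑ j ∈ seg M, ∑ s ∈ starts L M q, ∑ t ∈ starts L M q,
          a (s + q * i) (t + q * j) := by
        rw [sum_congr rfl fun s _ => sum_comm, sum_comm]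
        refine sum_congr rfl fun i _ => ?_
        rw [sum_congr rfl fun s _ => sum_comm, sum_comm]
    _ = ∑ i ∈ seg M, ∑ j ∈ seg M, tot₂ L a := by
        refine sum_congr rfl fun i hi => sum_congr rfl fun j hj => ?_
        rw [sum_congr rfl fun s _ => sum_starts L M hq (fun y => a (s + q * i) y)
          (fun y hy => hs' _ _ hy) hj, sum_comm,
          sum_congr rfl fun y _ => sum_starts L M hq (fun x => a x y)
          (fun x hx => hs _ _ hx) hi, sum_comm]
        rfl
    _ = _ := by simp only [sum_const, card_seg, nsmul_eq_mul]; ring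

lemma sum_mean_res {L M : ℕ} (hL : 0 < L) (hM : 0 < M) {q : ℤ} (hq : 0 < q) (e : ℤ → ℝ)
    (hs : ∀ x, x ∉ seg L → e x = 0) :
    ∑ s ∈ starts L M q, mean M (res M q s e) = mean L e * L := by
  unfold mean
  rw [← sum_div, sum_tot_res L M hq e hs]
  field_simp

/-- The energy of the densities on progressions is their variance plus the main term. -/
lemma energy_eq {L M : ℕ} (hL : 0 < L) (hM : 0 < M) {q : ℤ} (hq : 0 < q) (e : ℤ → ℝ)
    (hs : ∀ x, x ∉ seg L → e x = 0) :
    ∑ s ∈ starts L M q, mean M (res M q s e) ^ 2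
      = ∑ s ∈ starts L M q, (mean M (res M q s e) - mean L e) ^ 2
        + mean L e ^ 2 * (2 * L - (L + q * M)) := by
  have h1 : ∑ s ∈ starts L M q, (mean M (res M q s e) - mean L e) ^ 2
      = ∑ s ∈ starts L M q, mean M (res M q s e) ^ 2
        - 2 * mean L e * ∑ s ∈ starts L M q, mean M (res M q s e)
        + (L + q * M) * mean L e ^ 2 := by
    have : ((L : ℝ) + q * M) * mean L e ^ 2 = ∑ s ∈ starts L M q, mean L e ^ 2 := by
      rw [sum_const, nsmul_eq_mul, card_starts L M hq]
    rw [this, mul_sum, ← sum_sub_distrib, ← sum_add_distrib]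
    exact sum_congr rfl fun s _ => by ring
  rw [h1, sum_mean_res hL hM hq e hs]
  ring

lemma energy_ge {L M : ℕ} (hL : 0 < L) (hM : 0 < M) {q : ℤ} (hq : 0 < q) (e : ℤ → ℝ)
    (hs : ∀ x, x ∉ seg L → e x = 0) :
    mean L e ^ 2 * (2 * L - (L + q * M)) ≤ ∑ s ∈ starts L M q, mean M (res M q s e) ^ 2 := by
  rw [energy_eq hL hM hq e hs]
  have : 0 ≤ ∑ s ∈ starts L M q, (mean M (res M q s e) - mean L e) ^ 2 :=
    sum_nonneg fun _ _ => sq_nonneg _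
  linarith

lemma abs_bal_le {L : ℕ} (hL : 0 < L) {e : ℤ → ℝ} (he : ∀ x, e x = 0 ∨ e x = 1) (x : ℤ) :
    |bal L e x| ≤ 1 := by
  have h0 := mean_nonneg (L := L) (fun x => nonneg_of_ind (he x))
  have h1 := mean_le_one hL (fun x => le_one_of_ind (he x))
  unfold bal
  rw [abs_le]
  rcases he x with h | h <;> split_ifs <;> rw [h] <;> constructor <;> linarith

lemma bal_supp {L : ℕ} {e : ℤ → ℝ} (hs : ∀ x, x ∉ seg L → e x = 0) (x : ℤ) (hx : x ∉ seg L) :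
    bal L e x = 0 := by
  simp only [bal, hs x hx, if_neg hx, sub_zero]

/-- A large Fourier coefficient forces the density on progressions to fluctuate: by Dirichlet's
theorem there is a difference `q` such that the character is nearly constant on progressions of
length `M` and difference `q`. -/
lemma energy_inc {L M : ℕ} (hM : 0 < M) (hLM : M ^ 4 ≤ L) {e : ℤ → ℝ}
    (he : ∀ x, e x = 0 ∨ e x = 1) (hs : ∀ x, x ∉ seg L → e x = 0) {κ θ : ℝ} (hκ : 0 < κ)
    (hMκ : 18 ≤ M * κ) (hθ : κ * L ≤ ‖∑ x ∈ seg L, (bal L e x : ℂ) * ex (θ * x)‖) :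
    ∃ q : ℤ, 0 < q ∧ q ≤ M ^ 2 ∧
      mean L e ^ 2 * (2 * L - (L + q * M)) + κ ^ 2 * L / 8
        ≤ ∑ s ∈ starts L M q, mean M (res M q s e) ^ 2 := by
  have hL : 0 < L := lt_of_lt_of_le (by positivity) hLM
  have hLr : (0 : ℝ) < L := by positivity
  have hMr : (0 : ℝ) < M := by positivity
  have hM1 : (1 : ℝ) ≤ M := by exact_mod_cast hM
  have hLMr : (M : ℝ) ^ 4 ≤ L := by exact_mod_cast hLM
  obtain ⟨q', hq'0, hq'le, hq'⟩ := Real.exists_nat_abs_mul_sub_round_le θ (n := M ^ 2)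
    (by positivity)
  obtain ⟨q, hqdef⟩ : ∃ q : ℤ, q = (q' : ℤ) := ⟨_, rfl⟩
  have hq : 0 < q := by rw [hqdef]; exact_mod_cast hq'0
  have hqM : q ≤ M ^ 2 := by rw [hqdef]; exact_mod_cast hq'le
  have hqMr : (q : ℝ) ≤ (M : ℝ) ^ 2 := by exact_mod_cast hqM
  have hqr : (0 : ℝ) < q := by exact_mod_cast hq
  refine ⟨q, hq, hqM, ?_⟩
  rw [energy_eq hL hM hq e hs]
  set β := mean L e with hβ
  have hβ0 : 0 ≤ β := mean_nonneg (fun x => nonneg_of_ind (he x))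
  have hβ1 : β ≤ 1 := mean_le_one hL (fun x => le_one_of_ind (he x))
  set k : ℤ := round (q' * θ) with hk
  set g := bal L e with hg
  have hgs : ∀ x, x ∉ seg L → g x = 0 := bal_supp hs
  have hg1 : ∀ x, |g x| ≤ 1 := abs_bal_le hL he
  set T := starts L M q with hT
  -- the character is nearly constant on progressions of difference `q`
  have hphase : ∀ i ∈ seg M, ‖ex (θ * (q * i)) - 1‖ ≤ 8 / M := by
    intro i hi
    simp only [seg, mem_Ico] at hi
    have hi0 : (0 : ℝ) ≤ i := by exact_mod_cast hi.1
    have hi1 : (i : ℝ) ≤ M := by exact_mod_cast hi.2.le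
    have e1 : θ * (q * i) = (q' * θ - k) * i + ((k * i : ℤ) : ℝ) := by
      rw [hqdef]; push_cast; ring
    rw [e1, ex_add, ex_int, mul_one]
    refine (norm_ex_sub_one_le _).trans ?_
    rw [abs_mul, abs_of_nonneg hi0]
    have e2 : |(q' : ℝ) * θ - k| ≤ 1 / (M : ℝ) ^ 2 := by
      refine hq'.trans ?_
      push_cast
      gcongr
      linarith
    have e3 : |(q' : ℝ) * θ - k| * i ≤ 1 / (M : ℝ) ^ 2 * M := by gcongr
    have e4 : 1 / (M : ℝ) ^ 2 * M = 1 / M := by field_simp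
    rw [e4] at e3
    calc 2 * Real.pi * (|(q' : ℝ) * θ - k| * i) ≤ 2 * 4 * (1 / M) := by
          gcongr
          exact Real.pi_le_four
      _ = 8 / M := by ring
  have h1 : M * (κ * L) ≤ ∑ s ∈ T, |∑ i ∈ seg M, g (s + q * i)| + 8 * L := by
    have e1 : ∑ s ∈ T, ∑ i ∈ seg M, (g (s + q * i) : ℂ) * ex (θ * ((s + q * i : ℤ) : ℝ))
        = M * ∑ x ∈ seg L, (g x : ℂ) * ex (θ * x) := by
      rw [sum_comm, sum_congr rfl fun i hi => sum_starts L M hq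
        (fun x => (g x : ℂ) * ex (θ * x)) (fun x hx => by simp [hgs x hx]) hi]
      simp
    have e2 : ∑ s ∈ T, ∑ i ∈ seg M, |g (s + q * i)| ≤ M * L := by
      rw [sum_comm, sum_congr rfl fun i hi => sum_starts L M hq
        (fun x => |g x|) (fun x hx => by simp [hgs x hx]) hi, sum_const, card_seg, nsmul_eq_mul]
      gcongr
      calc ∑ x ∈ seg L, |g x| ≤ ∑ x ∈ seg L, (1 : ℝ) := sum_le_sum fun x _ => hg1 x
        _ = L := by simp
    calc M * (κ * L) ≤ M * ‖∑ x ∈ seg L, (g x : ℂ) * ex (θ * x)‖ := by gcongr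
      _ = ‖∑ s ∈ T, ∑ i ∈ seg M, (g (s + q * i) : ℂ) * ex (θ * ((s + q * i : ℤ) : ℝ))‖ := by
          rw [e1, norm_mul, Complex.norm_natCast]
      _ ≤ ∑ s ∈ T, ‖∑ i ∈ seg M, (g (s + q * i) : ℂ) * ex (θ * ((s + q * i : ℤ) : ℝ))‖ :=
          norm_sum_le _ _
      _ ≤ ∑ s ∈ T, (|∑ i ∈ seg M, g (s + q * i)| + 8 / M * ∑ i ∈ seg M, |g (s + q * i)|) := by
          refine sum_le_sum fun s _ => ?_
          have e3 : ∑ i ∈ seg M, (g (s + q * i) : ℂ) * ex (θ * ((s + q * i : ℤ) : ℝ))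
              = ex (θ * s) * (((∑ i ∈ seg M, g (s + q * i) : ℝ) : ℂ)
                + ∑ i ∈ seg M, (g (s + q * i) : ℂ) * (ex (θ * (q * i)) - 1)) := by
            rw [Complex.ofReal_sum, ← sum_add_distrib, mul_sum]
            refine sum_congr rfl fun i _ => ?_
            have : θ * ((s + q * i : ℤ) : ℝ) = θ * s + θ * (q * i) := by push_cast; ring
            rw [this, ex_add]; ring
          rw [e3, norm_mul, norm_ex, one_mul]
          refine (norm_add_le _ _).trans ?_
          rw [Complex.norm_real, Real.norm_eq_abs]
          gcongr
          refine (norm_sum_le _ _).trans ?_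
          rw [mul_sum]
          refine sum_le_sum fun i hi => ?_
          rw [norm_mul, Complex.norm_real, Real.norm_eq_abs, mul_comm]
          gcongr
          exact hphase i hi
      _ = ∑ s ∈ T, |∑ i ∈ seg M, g (s + q * i)|
            + 8 / M * ∑ s ∈ T, ∑ i ∈ seg M, |g (s + q * i)| := by
          rw [sum_add_distrib, mul_sum]
      _ ≤ ∑ s ∈ T, |∑ i ∈ seg M, g (s + q * i)| + 8 / M * (M * L) := by gcongr
      _ = _ := by field_simp
  -- compare with the fluctuation of the densities, up to boundary progressions
  have h2 : ∑ s ∈ T, |∑ i ∈ seg M, g (s + q * i)|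
      ≤ M * ∑ s ∈ T, |mean M (res M q s e) - β| + M * (q * M) := by
    set X : ℤ → ℝ := fun x => if x ∈ seg L then 1 else 0 with hX
    have hX1 : ∀ x, X x ≤ 1 := fun x => by simp only [hX]; split_ifs <;> norm_num
    have e1 : ∑ s ∈ T, ∑ i ∈ seg M, (1 - X (s + q * i)) = M * (q * M) := by
      simp_rw [sum_sub_distrib]
      have e2 : ∑ s ∈ T, ∑ i ∈ seg M, X (s + q * i) = M * L := by
        rw [sum_comm, sum_congr rfl fun i hi => sum_starts L M hq X
          (fun x hx => by simp only [hX, if_neg hx]) hi]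
        have : ∑ x ∈ seg L, X x = L := by
          rw [sum_congr rfl fun x hx => (by simp only [hX, if_pos hx] : X x = 1)]
          simp
        rw [this]; simp
      rw [e2, sum_const, sum_const, card_seg, nsmul_eq_mul, nsmul_eq_mul, hT, card_starts L M hq]
      ring
    rw [mul_sum, ← e1, ← sum_add_distrib]
    refine sum_le_sum fun s _ => ?_
    have e3 : ∑ i ∈ seg M, g (s + q * i)
        = M * (mean M (res M q s e) - β) + β * ∑ i ∈ seg M, (1 - X (s + q * i)) := by
      rw [mul_sub, mul_comm (M : ℝ) (mean M _), ← tot_eq hM, tot_res]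
      have : (M : ℝ) * β = ∑ i ∈ seg M, β := by simp
      rw [this, mul_sum, ← sum_sub_distrib, ← sum_add_distrib]
      refine sum_congr rfl fun i _ => ?_
      simp only [hg, bal, hX]
      split_ifs <;> ring
    have e4 : 0 ≤ ∑ i ∈ seg M, (1 - X (s + q * i)) :=
      sum_nonneg fun i _ => by linarith [hX1 (s + q * i)]
    rw [e3]
    refine (abs_add_le _ _).trans ?_
    rw [abs_mul, abs_of_pos hMr, abs_of_nonneg (mul_nonneg hβ0 e4)]
    nlinarith
  set V := ∑ s ∈ T, |mean M (res M q s e) - β| with hV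
  have hqMM : (q : ℝ) * M * M ≤ L := by
    calc (q : ℝ) * M * M ≤ (M : ℝ) ^ 2 * M * M := by gcongr
      _ = M ^ 4 := by ring
      _ ≤ L := hLMr
  have h3 : κ * L / 2 ≤ V := by
    have : M * (κ * L / 2) ≤ M * V := by
      have h4 : 18 * L ≤ M * κ * L := by gcongr
      nlinarith
    exact le_of_mul_le_mul_left this hMr
  have hK : ((T.card : ℕ) : ℝ) ≤ 2 * L := by
    rw [hT, card_starts L M hq]
    have : (q : ℝ) * M * 1 ≤ q * M * M := by gcongr
    linarith
  have h5 : V ^ 2 ≤ T.card * ∑ s ∈ T, (mean M (res M q s e) - β) ^ 2 := by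
    have := sq_sum_le_card_mul_sum_sq (s := T) (f := fun s => |mean M (res M q s e) - β|)
    simpa only [sq_abs] using this
  have h6 : 0 ≤ ∑ s ∈ T, (mean M (res M q s e) - β) ^ 2 := sum_nonneg fun _ _ => sq_nonneg _
  have h7 : (κ * L / 2) ^ 2 ≤ 2 * L * ∑ s ∈ T, (mean M (res M q s e) - β) ^ 2 := by
    calc (κ * L / 2) ^ 2 ≤ V ^ 2 := by gcongr
      _ ≤ _ := h5
      _ ≤ _ := by gcongr
  have h8 : κ ^ 2 * L / 8 ≤ ∑ s ∈ T, (mean M (res M q s e) - β) ^ 2 := by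
    have : (2 * (L : ℝ)) * (κ ^ 2 * L / 8) ≤ 2 * L * ∑ s ∈ T, (mean M (res M q s e) - β) ^ 2 := by
      refine le_trans (le_of_eq ?_) h7; ring
    exact le_of_mul_le_mul_left this (by positivity)
  linarith

/-! ### The potential increases when a side is not uniform -/

/-- The quantity increased by passing to subprogressions: the excess of `a` over the density `δ`
relative to `E₁ × E₂`, plus a multiple of the energy of the densities of `E₁` and `E₂`. -/
noncomputable def pot (c δ : ℝ) (L : ℕ) (e₁ e₂ : ℤ → ℝ) (a : ℤ → ℤ → ℝ) : ℝ :=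
  (tot₂ L a - δ * (tot L e₁ * tot L e₂)) / L ^ 2 + c * (mean L e₁ ^ 2 + mean L e₂ ^ 2)

lemma tot_nonneg {L : ℕ} {e : ℤ → ℝ} (h : ∀ x, 0 ≤ e x) : 0 ≤ tot L e :=
  sum_nonneg fun x _ => h x

lemma Conf.tot₂_le {L : ℕ} {e₁ e₂ : ℤ → ℝ} {a : ℤ → ℤ → ℝ} (h : Conf L e₁ e₂ a) :
    tot₂ L a ≤ tot L e₁ * tot L e₂ := by
  unfold tot₂ tot
  rw [sum_mul_sum]
  refine sum_le_sum fun x _ => sum_le_sum fun y _ => ?_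
  rcases h.ind₁ x with h1 | h1
  · rw [h.left x y h1, h1, zero_mul]
  rcases h.ind₂ y with h2 | h2
  · rw [h.right x y h2, h2, mul_zero]
  rw [h1, h2]
  have := le_one_of_ind (h.ind x y)
  linarith

lemma Conf.tot₂_le_sq {L : ℕ} {e₁ e₂ : ℤ → ℝ} {a : ℤ → ℤ → ℝ} (h : Conf L e₁ e₂ a) :
    tot₂ L a ≤ L ^ 2 := by
  refine h.tot₂_le.trans ?_
  rw [sq]
  exact mul_le_mul (tot_le fun x => le_one_of_ind (h.ind₁ x))
    (tot_le fun x => le_one_of_ind (h.ind₂ x))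
    (tot_nonneg fun x => nonneg_of_ind (h.ind₂ x)) (Nat.cast_nonneg _)

set_option maxHeartbeats 600000 in
/-- Averaging the potential over all pairs of progressions with common difference `q`. -/
lemma exists_res {L M : ℕ} (hM : 0 < M) (hLM : M ^ 4 ≤ L) {e₁ e₂ : ℤ → ℝ} {a : ℤ → ℤ → ℝ}
    (h : Conf L e₁ e₂ a) {c κ δ : ℝ} (hc : 0 < c) (hc1 : c ≤ 1) (hκ : 0 < κ)
    (hMc : 96 ≤ M * c * κ ^ 2) (hδ : 0 ≤ δ) {q : ℤ} (hq : 0 < q) (hqM : q ≤ M ^ 2)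
    (hS : (mean L e₁ ^ 2 + mean L e₂ ^ 2) * (2 * L - (L + q * M)) + κ ^ 2 * L / 8
      ≤ ∑ s ∈ starts L M q, mean M (res M q s e₁) ^ 2
        + ∑ s ∈ starts L M q, mean M (res M q s e₂) ^ 2) :
    ∃ s t : ℤ, pot c δ L e₁ e₂ a + c * κ ^ 2 / 32
      ≤ pot c δ M (res M q s e₁) (res M q t e₂) (res₂ M q s t a) := by
  have hL : 0 < L := lt_of_lt_of_le (by positivity) hLM
  have hLr : (0 : ℝ) < L := by positivity
  have hMr : (0 : ℝ) < M := by positivity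
  have hM1 : (1 : ℝ) ≤ M := by exact_mod_cast hM
  have hLMr : (M : ℝ) ^ 4 ≤ L := by exact_mod_cast hLM
  have hqMr : (q : ℝ) ≤ (M : ℝ) ^ 2 := by exact_mod_cast hqM
  have hqr : (0 : ℝ) < q := by exact_mod_cast hq
  set T := starts L M q with hT
  have hcard := card_starts L M hq
  rw [← hT] at hcard
  obtain ⟨D, hD⟩ : ∃ D : ℝ, D = q * M := ⟨_, rfl⟩
  obtain ⟨K, hK⟩ : ∃ K : ℝ, K = L + D := ⟨_, rfl⟩
  rw [← hD] at hcard hS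
  rw [← hK] at hcard hS
  have hD0 : 0 < D := by rw [hD]; positivity
  have hDM : D * M ≤ L := by
    calc D * M ≤ (M : ℝ) ^ 2 * M * M := by rw [hD]; gcongr
      _ = M ^ 4 := by ring
      _ ≤ L := hLMr
  have hDL : D ≤ L := by nlinarith
  set F : ℝ := tot₂ L a - δ * (tot L e₁ * tot L e₂) with hF
  set B := mean L e₁ ^ 2 + mean L e₂ ^ 2 with hB
  have ht1 := tot_nonneg (L := L) fun x => nonneg_of_ind (h.ind₁ x)
  have ht2 := tot_nonneg (L := L) fun x => nonneg_of_ind (h.ind₂ x)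
  have hF1 : F ≤ L ^ 2 := by
    have := h.tot₂_le_sq
    have := mul_nonneg hδ (mul_nonneg ht1 ht2)
    linarith
  have hB0 : 0 ≤ B := by positivity
  have hB2 : B ≤ 2 := by
    have h1 := mean_nonneg (L := L) fun x => nonneg_of_ind (h.ind₁ x)
    have h2 := mean_nonneg (L := L) fun x => nonneg_of_ind (h.ind₂ x)
    have h3 := mean_le_one hL fun x => le_one_of_ind (h.ind₁ x)
    have h4 := mean_le_one hL fun x => le_one_of_ind (h.ind₂ x)
    nlinarith
  set S₁ := ∑ s ∈ T, mean M (res M q s e₁) ^ 2 with hS₁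
  set S₂ := ∑ s ∈ T, mean M (res M q s e₂) ^ 2 with hS₂
  have hsum : ∑ p ∈ T ×ˢ T, pot c δ M (res M q p.1 e₁) (res M q p.2 e₂) (res₂ M q p.1 p.2 a)
      = F + c * (K * (S₁ + S₂)) := by
    rw [sum_product]
    unfold pot
    simp_rw [sum_add_distrib, ← sum_div, ← mul_sum, sum_sub_distrib, ← mul_sum, sum_add_distrib,
      sum_const, nsmul_eq_mul, ← mul_sum]
    rw [sum_tot₂_res L M hq a (fun x y hx => h.left _ _ (h.supp₁ x hx))
      (fun x y hy => h.right _ _ (h.supp₂ y hy)), ← sum_mul,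
      sum_tot_res L M hq e₁ h.supp₁, sum_tot_res L M hq e₂ h.supp₂, hcard, hF]
    field_simp
    ring
  by_contra! hcon
  have hne : (T ×ˢ T).Nonempty := by
    have : T.Nonempty := by
      rw [← card_pos]
      have : (0 : ℝ) < (T.card : ℝ) := by rw [hcard]; linarith
      exact_mod_cast this
    exact this.product this
  have hlt := sum_lt_sum_of_nonempty hne fun p (_ : p ∈ T ×ˢ T) => hcon p.1 p.2
  rw [hsum, sum_const, card_product, nsmul_eq_mul, Nat.cast_mul, hcard] at hlt
  unfold pot at hlt
  rw [← hF, ← hB] at hlt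
  have hK0 : 0 < K := by linarith
  -- the first term loses at most `2 K D`
  have h1 : K ^ 2 * (F / L ^ 2) ≤ F + 2 * K * D := by
    have e1 : F / (L : ℝ) ^ 2 ≤ 1 := by
      rw [div_le_one (by positivity)]; exact hF1
    have e2 : F = L ^ 2 * (F / L ^ 2) := by field_simp
    have e3 : K ^ 2 - L ^ 2 = D * (K + L) := by rw [hK]; ring
    have e4 : (K ^ 2 - L ^ 2) * (F / L ^ 2) ≤ (K ^ 2 - L ^ 2) * 1 := by
      apply mul_le_mul_of_nonneg_left e1
      rw [e3]; positivity
    have e5 : D * (K + L) ≤ D * (K + K) := by gcongr; linarith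
    have e6 : K ^ 2 * (F / L ^ 2) = F + (K ^ 2 - L ^ 2) * (F / L ^ 2) := by
      linear_combination -e2
    rw [e3] at e4 e6
    linarith
  have h2 : c * (K * (B * (2 * L - K) + κ ^ 2 * L / 8)) ≤ c * (K * (S₁ + S₂)) := by gcongr
  have h3 : 6 * D ≤ c * κ ^ 2 * L / 16 := by
    have : 96 * D ≤ c * κ ^ 2 * L := by
      calc 96 * D ≤ M * c * κ ^ 2 * D := by gcongr
        _ = c * κ ^ 2 * (D * M) := by ring
        _ ≤ _ := by gcongr
    linarith
  have h4 : c * B * D ≤ 2 * D := by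
    have : c * B ≤ 1 * 2 := mul_le_mul hc1 hB2 hB0 zero_le_one
    nlinarith
  have h5 : K * (c * κ ^ 2 / 32) ≤ c * κ ^ 2 * L / 16 := by
    have : K ≤ 2 * L := by linarith
    calc K * (c * κ ^ 2 / 32) ≤ 2 * L * (c * κ ^ 2 / 32) := by gcongr
      _ = _ := by ring
  have h6 : K * (2 * D + 2 * (c * B * D) + K * (c * κ ^ 2 / 32)) ≤ K * (c * κ ^ 2 * L / 8) := by
    apply mul_le_mul_of_nonneg_left _ hK0.le
    linarith
  have h7 : c * (K * (B * (2 * L - K) + κ ^ 2 * L / 8))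
      = K ^ 2 * (c * B) - K * (2 * (c * B * D)) + K * (c * κ ^ 2 * L / 8) := by
    rw [hK]; ring
  linarith

/-- Failure of uniformity of either set yields a pair of progressions with larger potential. -/
lemma ap_step {L M : ℕ} (hM : 0 < M) (hLM : M ^ 4 ≤ L) {e₁ e₂ : ℤ → ℝ} {a : ℤ → ℤ → ℝ}
    (h : Conf L e₁ e₂ a) {c η δ : ℝ} (hc : 0 < c) (hc1 : c ≤ 1) (hη : 0 < η) (hη1 : η ≤ 1)
    (hMc : 216 ≤ M * c * η ^ 2) (hδ : 0 ≤ δ) (hU : ¬ (Unif η L e₁ ∧ Unif η L e₂)) :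
    ∃ u v b, Conf M u v b ∧ pot c δ L e₁ e₂ a + c * η ^ 2 / 72 ≤ pot c δ M u v b := by
  have hL : 0 < L := lt_of_lt_of_le (by positivity) hLM
  have hMr : (0 : ℝ) < M := by positivity
  have key : ∀ e : ℤ → ℝ, (∀ x, e x = 0 ∨ e x = 1) → (∀ x, x ∉ seg L → e x = 0) →
      ¬ Unif η L e → ∃ q : ℤ, 0 < q ∧ q ≤ M ^ 2 ∧
        mean L e ^ 2 * (2 * L - (L + q * M)) + (2 / 3 * η) ^ 2 * L / 8
          ≤ ∑ s ∈ starts L M q, mean M (res M q s e) ^ 2 := by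
    intro e he hs hn
    have : ∃ θ : ℝ, (2 / 3 * η) * L ≤ ‖∑ x ∈ seg L, (bal L e x : ℂ) * ex (θ * x)‖ := by
      by_contra! hcon
      apply hn
      intro u v hu hv
      have := bilinear_le L hL (bal L e) u v (2 / 3 * η) (bal_supp hs) hu hv
        fun θ => (hcon θ).le
      linarith
    obtain ⟨θ, hθ⟩ := this
    refine energy_inc hM hLM he hs (by positivity) ?_ hθ
    have : M * c * η ^ 2 ≤ M * 1 * (η * 1) := by rw [sq]; gcongr
    linarith
  have hκ : c * η ^ 2 / 72 = c * (2 / 3 * η) ^ 2 / 32 := by ring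
  have hMκ : 96 ≤ M * c * (2 / 3 * η) ^ 2 := by linarith
  obtain ⟨q, hq, hqM, hS⟩ : ∃ q : ℤ, 0 < q ∧ q ≤ M ^ 2 ∧
      (mean L e₁ ^ 2 + mean L e₂ ^ 2) * (2 * L - (L + q * M)) + (2 / 3 * η) ^ 2 * L / 8
      ≤ ∑ s ∈ starts L M q, mean M (res M q s e₁) ^ 2
        + ∑ s ∈ starts L M q, mean M (res M q s e₂) ^ 2 := by
    by_cases h1 : Unif η L e₁
    · obtain ⟨q, hq, hqM, hS⟩ := key e₂ h.ind₂ h.supp₂ fun h2 => hU ⟨h1, h2⟩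
      refine ⟨q, hq, hqM, ?_⟩
      have := energy_ge hL hM hq e₁ h.supp₁
      linarith
    · obtain ⟨q, hq, hqM, hS⟩ := key e₁ h.ind₁ h.supp₁ h1
      refine ⟨q, hq, hqM, ?_⟩
      have := energy_ge hL hM hq e₂ h.supp₂
      linarith
  obtain ⟨s, t, hst⟩ := exists_res hM hLM h hc hc1 (by positivity) hMκ hδ hq hqM hS
  exact ⟨_, _, _, h.res M hq s t, hκ ▸ hst⟩

/-! ### Iteration -/

lemma pot_le {L : ℕ} (hL : 0 < L) {e₁ e₂ : ℤ → ℝ} {a : ℤ → ℤ → ℝ} (h : Conf L e₁ e₂ a)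
    {c δ : ℝ} (hc : 0 ≤ c) :
    pot c δ L e₁ e₂ a ≤ (tot₂ L a - δ * (tot L e₁ * tot L e₂)) / L ^ 2 + 2 * c := by
  unfold pot
  have h1 := mean_nonneg (L := L) fun x => nonneg_of_ind (h.ind₁ x)
  have h2 := mean_nonneg (L := L) fun x => nonneg_of_ind (h.ind₂ x)
  have h3 := mean_le_one hL fun x => le_one_of_ind (h.ind₁ x)
  have h4 := mean_le_one hL fun x => le_one_of_ind (h.ind₂ x)
  have : mean L e₁ ^ 2 + mean L e₂ ^ 2 ≤ 2 := by nlinarith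
  nlinarith

/-- Since the potential is bounded, finitely many passages to progressions reach a uniform pair. -/
lemma uniformize {M : ℕ} (hM : 0 < M) {c η δ : ℝ} (hc : 0 < c) (hc1 : c ≤ 1) (hη : 0 < η)
    (hη1 : η ≤ 1) (hMc : 216 ≤ M * c * η ^ 2) (hδ : 0 ≤ δ) (n : ℕ) :
    ∀ (L : ℕ) (e₁ e₂ : ℤ → ℝ) (a : ℤ → ℤ → ℝ), Conf L e₁ e₂ a → M ^ 4 ^ n ≤ L →
      3 < pot c δ L e₁ e₂ a + n * (c * η ^ 2 / 72) →
      ∃ (L' : ℕ) (u v : ℤ → ℝ) (b : ℤ → ℤ → ℝ), M ≤ L' ∧ Conf L' u v b ∧ Unif η L' u ∧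
        Unif η L' v ∧ pot c δ L e₁ e₂ a ≤ pot c δ L' u v b := by
  induction n with
  | zero =>
    intro L e₁ e₂ a h hL hp
    exfalso
    have hL0 : 0 < L := lt_of_lt_of_le (by positivity) hL
    have h1 := pot_le hL0 h hc.le (δ := δ)
    have h2 : (tot₂ L a - δ * (tot L e₁ * tot L e₂)) / (L : ℝ) ^ 2 ≤ 1 := by
      rw [div_le_one (by positivity)]
      have := h.tot₂_le_sq
      have := mul_nonneg hδ (mul_nonneg (tot_nonneg (L := L) fun x => nonneg_of_ind (h.ind₁ x))
        (tot_nonneg (L := L) fun x => nonneg_of_ind (h.ind₂ x)))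
      linarith
    push_cast at hp
    linarith
  | succ n ih =>
    intro L e₁ e₂ a h hL hp
    have hM1 : M ≤ M ^ 4 ^ n := Nat.le_self_pow (by positivity) M
    by_cases hU : Unif η L e₁ ∧ Unif η L e₂
    · refine ⟨L, e₁, e₂, a, ?_, h, hU.1, hU.2, le_rfl⟩
      exact (Nat.le_self_pow (by positivity) M).trans hL
    · have hL' : (M ^ 4 ^ n) ^ 4 ≤ L := by rw [← pow_mul, ← pow_succ]; exact hL
      have hMc' : 216 ≤ ((M ^ 4 ^ n : ℕ) : ℝ) * c * η ^ 2 := by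
        refine hMc.trans ?_
        have : (M : ℝ) ≤ ((M ^ 4 ^ n : ℕ) : ℝ) := by exact_mod_cast hM1
        gcongr
      obtain ⟨u, v, b, hb, hpot⟩ := ap_step (by positivity) hL' h hc hc1 hη hη1 hMc' hδ hU
      obtain ⟨L', u', v', b', h1, h2, h3, h4, h5⟩ := ih _ u v b hb le_rfl (by
        push_cast at hp; linarith)
      exact ⟨L', u', v', b', h1, h2, h3, h4, by
        have : 0 < c * η ^ 2 / 72 := by positivity
        linarith⟩

/-- One full step: pass to progressions until both sets are uniform, then to a denser product. -/
lemma full_step {M T : ℕ} (hM : 0 < M) {δ₀ s η : ℝ} (hδ₀ : 0 < δ₀) (hs : 0 < s) (hη : 0 < η)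
    (hη1 : η ≤ 1) (hηs : η ≤ δ₀ ^ 10 * (s / 2) ^ 6 / 8192) (hMs : 864 ≤ M * (s * η ^ 2))
    (hTs : 864 ≤ T * (s * η ^ 2)) (hMδ : 4 ≤ δ₀ ^ 3 * (s / 2) ^ 2 * M)
    {L : ℕ} {e₁ e₂ : ℤ → ℝ} {a : ℤ → ℤ → ℝ} (h : Conf L e₁ e₂ a) (hL : M ^ 4 ^ T ≤ L)
    {δ : ℝ} (hδ : δ₀ ≤ δ) (ha : δ * (tot L e₁ * tot L e₂) + s * L ^ 2 ≤ tot₂ L a) :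
    ∃ (L' : ℕ) (u v : ℤ → ℝ) (b : ℤ → ℤ → ℝ), M ≤ L' ∧ Conf L' u v b ∧
      (δ + δ₀ ^ 10 / 147456) * (tot L' u * tot L' v) + δ₀ ^ 10 / 147456 / 2 * s * L' ^ 2
        ≤ tot₂ L' b := by
  have hL0 : 0 < L := lt_of_lt_of_le (by positivity) hL
  have hδ' : 0 ≤ δ := hδ₀.le.trans hδ
  have hLsq : (0 : ℝ) < (L : ℝ) ^ 2 := by positivity
  have hs1 : s ≤ 1 := by
    have h1 := h.tot₂_le_sq
    have h2 := mul_nonneg hδ' (mul_nonneg (tot_nonneg (L := L) fun x => nonneg_of_ind (h.ind₁ x))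
        (tot_nonneg (L := L) fun x => nonneg_of_ind (h.ind₂ x)))
    have : s * (L : ℝ) ^ 2 ≤ 1 * L ^ 2 := by linarith
    exact le_of_mul_le_mul_right this hLsq
  have hpot : s ≤ pot (s / 4) δ L e₁ e₂ a := by
    unfold pot
    have h1 : s ≤ (tot₂ L a - δ * (tot L e₁ * tot L e₂)) / (L : ℝ) ^ 2 := by
      rw [le_div_iff₀ hLsq]; linarith
    have h2 : 0 ≤ s / 4 * (mean L e₁ ^ 2 + mean L e₂ ^ 2) := by positivity
    linarith
  obtain ⟨L', u, v, b, hML, hb, hU₁, hU₂, hp⟩ := uniformize hM (c := s / 4) (δ := δ)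
    (by positivity) (by linarith) hη hη1 (by linarith) hδ' T L e₁ e₂ a h hL (by linarith)
  have hL'0 : 0 < L' := lt_of_lt_of_le hM hML
  have hL'sq : (0 : ℝ) < (L' : ℝ) ^ 2 := by positivity
  have hex : δ * (tot L' u * tot L' v) + s / 2 * L' ^ 2 ≤ tot₂ L' b := by
    have h1 := pot_le hL'0 hb (c := s / 4) (δ := δ) (by positivity)
    have h2 : s / 2 ≤ (tot₂ L' b - δ * (tot L' u * tot L' v)) / (L' : ℝ) ^ 2 := by linarith
    rw [le_div_iff₀ hL'sq] at h2
    linarith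
  obtain ⟨u', v', b', hb', hfin⟩ := increment hL'0 hb hδ₀ hδ (by positivity) hex hη.le hηs
    (hMδ.trans (by gcongr)) hU₁ hU₂
  exact ⟨L', u', v', b', hML, hb', le_trans (le_of_eq (by ring)) hfin⟩

/-- Iterating the density increment: the density exceeds `1` after finitely many steps. -/
lemma no_conf {M T : ℕ} (hM : 0 < M) {δ₀ σ η : ℝ} (hδ₀ : 0 < δ₀) (hδ₀1 : δ₀ ≤ 1) (hσ : 0 < σ)
    (hη : 0 < η) (hη1 : η ≤ 1) (hησ : η ≤ δ₀ ^ 10 * (σ / 2) ^ 6 / 8192)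
    (hMσ : 864 ≤ M * (σ * η ^ 2)) (hTσ : 864 ≤ T * (σ * η ^ 2))
    (hMδ : 4 ≤ δ₀ ^ 3 * (σ / 2) ^ 2 * M) (n : ℕ) :
    ∀ (L : ℕ) (e₁ e₂ : ℤ → ℝ) (a : ℤ → ℤ → ℝ) (δ s : ℝ), Conf L e₁ e₂ a →
      M ^ 4 ^ (T * n) ≤ L → δ₀ ≤ δ → 1 ≤ δ + n * (δ₀ ^ 10 / 147456) →
      σ ≤ (δ₀ ^ 10 / 147456 / 2) ^ n * s →
      ¬ δ * (tot L e₁ * tot L e₂) + s * L ^ 2 ≤ tot₂ L a := by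
  induction n with
  | zero =>
    intro L e₁ e₂ a δ s h hL hδ hδn hs ha
    have hL0 : 0 < L := lt_of_lt_of_le (by positivity) hL
    have h1 := h.tot₂_le
    have h2 := mul_nonneg (tot_nonneg (L := L) fun x => nonneg_of_ind (h.ind₁ x))
        (tot_nonneg (L := L) fun x => nonneg_of_ind (h.ind₂ x))
    have h3 : 0 < s * (L : ℝ) ^ 2 := by
      have : 0 < s := by linarith
      positivity
    simp only [Nat.cast_zero, zero_mul, add_zero] at hδn
    nlinarith
  | succ n ih =>
    intro L e₁ e₂ a δ s h hL hδ hδn hs ha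
    set k := δ₀ ^ 10 / 147456 with hk
    have hk0 : 0 < k := by positivity
    have hk1 : k / 2 ≤ 1 := by
      have : δ₀ ^ 10 ≤ 1 := pow_le_one₀ hδ₀.le hδ₀1
      rw [hk]; linarith
    have hs0 : 0 < s := by
      have : 0 < (k / 2) ^ (n + 1) * s := hσ.trans_le hs
      exact (pos_iff_pos_of_mul_pos this).1 (by positivity)
    have hσs : σ ≤ s := by
      refine hs.trans ?_
      have : (k / 2) ^ (n + 1) ≤ 1 := pow_le_one₀ (by positivity) hk1
      nlinarith
    have hMM : (M : ℝ) ≤ ((M ^ 4 ^ (T * n) : ℕ) : ℝ) := by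
      exact_mod_cast Nat.le_self_pow (by positivity) M
    obtain ⟨L', u, v, b, h1, h2, h3⟩ := full_step (M := M ^ 4 ^ (T * n)) (T := T) (by positivity)
      hδ₀ hs0 hη hη1 (hησ.trans (by gcongr))
      (hMσ.trans (mul_le_mul hMM (by gcongr) (by positivity) (by positivity)))
      (hTσ.trans (by gcongr))
      (hMδ.trans (mul_le_mul (by gcongr) hMM (by positivity) (by positivity))) h
      (by rw [← pow_mul, ← pow_add, ← mul_add_one]; exact hL) hδ ha
    rw [← hk] at h3
    refine ih L' u v b (δ + k) (k / 2 * s) h2 h1 (by linarith) (by push_cast at hδn; linarith) ?_ h3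
    rw [← mul_assoc, ← pow_succ]
    exact hs

/-! ### The initial configuration -/

/-- The set is first translated to `[0, N)²`. A corner-free set and some reflection of it intersect in a large set, which is free of corners
with both positive and negative `d`. -/
lemma exists_conf {N : ℕ} (hN : 0 < N) {A : Finset (ℕ × ℕ)} (hA : A ⊆ Icc 1 N ×ˢ Icc 1 N)
    (hfree : CornerFree A) {α : ℝ} (hα : 0 ≤ α) (hcard : α * N ^ 2 ≤ A.card) :
    ∃ (e₁ e₂ : ℤ → ℝ) (a : ℤ → ℤ → ℝ), Conf N e₁ e₂ a ∧
      α ^ 2 / 8 * (tot N e₁ * tot N e₂) + α ^ 2 / 8 * N ^ 2 ≤ tot₂ N a := by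
  classical
  set S : Finset (ℤ × ℤ) := A.image fun p => ((p.1 : ℤ) - 1, (p.2 : ℤ) - 1) with hS
  have hScard : S.card = A.card := by
    apply card_image_of_injective
    rintro ⟨x, y⟩ ⟨x', y'⟩ h
    simp only [Prod.mk.injEq] at h ⊢
    omega
  have hSsub : S ⊆ seg N ×ˢ seg N := by
    intro p hp
    obtain ⟨⟨x, y⟩, hxy, rfl⟩ := mem_image.1 hp
    have := hA hxy
    simp only [seg, mem_product, mem_Icc, mem_Ico] at this ⊢
    omega
  have hSfree : ∀ x y d : ℤ, 0 < d → (x, y) ∈ S → (x + d, y) ∈ S → (x, y + d) ∉ S := by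
    intro x y d hd h1 h2 h3
    obtain ⟨⟨x₁, y₁⟩, m1, h1⟩ := mem_image.1 h1
    obtain ⟨⟨x₂, y₂⟩, m2, h2⟩ := mem_image.1 h2
    obtain ⟨⟨x₃, y₃⟩, m3, h3⟩ := mem_image.1 h3
    simp only [Prod.mk.injEq] at h1 h2 h3
    refine hfree ⟨x₁, y₁, d.toNat, by omega, m1, ?_, ?_⟩
    · convert m2 using 2 <;> omega
    · convert m3 using 2 <;> omega
  set f : ℤ → ℤ → ℝ := fun x y => if (x, y) ∈ S then 1 else 0 with hf
  have hf1 : ∀ x y, f x y = 1 → (x, y) ∈ S := by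
    intro x y h
    by_contra hn
    simp [hf, hn] at h
  have hf01 : ∀ x y, f x y = 0 ∨ f x y = 1 := by
    intro x y; simp only [hf]; split_ifs <;> simp
  have hfl : ∀ x y, x ∉ seg N → f x y = 0 := by
    intro x y hx
    have : (x, y) ∉ S := fun h => hx (mem_product.1 (hSsub h)).1
    simp only [hf, if_neg this]
  have hfr : ∀ x y, y ∉ seg N → f x y = 0 := by
    intro x y hx
    have : (x, y) ∉ S := fun h => hx (mem_product.1 (hSsub h)).2
    simp only [hf, if_neg this]
  have htot : tot₂ N f = A.card := by
    unfold tot₂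
    rw [← sum_product', ← hScard]
    simp only [hf, Prod.mk.eta]
    rw [sum_ite_mem, inter_eq_right.2 hSsub]
    simp
  have hsum : ∑ p ∈ seg (2 * N) ×ˢ seg (2 * N),
      ∑ x ∈ seg N, ∑ y ∈ seg N, f x y * f (p.1 - x) (p.2 - y) = (A.card : ℝ) ^ 2 := by
    rw [sum_comm]
    calc _ = ∑ x ∈ seg N, ∑ y ∈ seg N, f x y * tot₂ N f := by
          refine sum_congr rfl fun x hx => ?_
          rw [sum_comm]
          refine sum_congr rfl fun y hy => ?_
          rw [← mul_sum, sum_product]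
          congr 1
          simp only [seg, mem_Ico] at hx hy
          rw [sum_congr rfl fun u _ => sum_shift N (seg (2 * N)) (fun w => f (u - x) w) y
            (fun w hw => hfr _ _ hw) (by
              intro w hw; simp only [seg, mem_Ico] at hw ⊢; push_cast; omega), sum_comm,
            sum_congr rfl fun w _ => sum_shift N (seg (2 * N)) (fun t => f t w) x
            (fun t ht => hfl _ _ ht) (by
              intro w hw; simp only [seg, mem_Ico] at hw ⊢; push_cast; omega), sum_comm]
          rfl
      _ = tot₂ N f * tot₂ N f := by
          simp_rw [← sum_mul]; rfl
      _ = _ := by rw [htot, sq]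
  obtain ⟨⟨u, v⟩, huv⟩ : ∃ p : ℤ × ℤ, α ^ 2 / 4 * N ^ 2
      ≤ ∑ x ∈ seg N, ∑ y ∈ seg N, f x y * f (p.1 - x) (p.2 - y) := by
    by_contra! hcon
    have hne : (seg (2 * N) ×ˢ seg (2 * N)).Nonempty := by
      have : (0 : ℤ) ∈ seg (2 * N) := mem_Ico.2 ⟨le_rfl, by positivity⟩
      exact ⟨(0, 0), mem_product.2 ⟨this, this⟩⟩
    have hlt := sum_lt_sum_of_nonempty hne fun p _ => hcon p
    rw [hsum, sum_const, card_product, card_seg, nsmul_eq_mul] at hlt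
    push_cast at hlt
    have : (α * (N : ℝ) ^ 2) ^ 2 ≤ (A.card : ℝ) ^ 2 := by gcongr
    nlinarith
  refine ⟨fun x => if x ∈ seg N then 1 else 0, fun x => if x ∈ seg N then 1 else 0,
    fun x y => f x y * f (u - x) (v - y), ?_, ?_⟩
  · have hmul : ∀ x y, f x y * f (u - x) (v - y) = 1 → (x, y) ∈ S ∧ (u - x, v - y) ∈ S := by
      intro x y h
      rcases hf01 x y with h1 | h1
      · rw [h1, zero_mul] at h; norm_num at h
      rw [h1, one_mul] at h
      exact ⟨hf1 _ _ h1, hf1 _ _ h⟩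
    refine ⟨?_, ?_, ?_, ?_, ?_, ?_, ?_, ?_⟩
    · intro x; split_ifs <;> simp
    · intro x; split_ifs <;> simp
    · intro x y
      rcases hf01 x y with h1 | h1
      · left; simp only [h1, zero_mul]
      · simp only [h1, one_mul]; exact hf01 _ _
    · intro x hx; simp only [if_neg hx]
    · intro x hx; simp only [if_neg hx]
    · intro x y hx
      by_cases h : x ∈ seg N
      · rw [if_pos h] at hx; norm_num at hx
      · simp only [hfl x y h, zero_mul]
    · intro x y hx
      by_cases h : y ∈ seg N
      · rw [if_pos h] at hx; norm_num at hx
      · simp only [hfr x y h, zero_mul]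
    · intro x y d h1 h2 h3
      obtain ⟨a1, b1⟩ := hmul _ _ h1
      obtain ⟨a2, b2⟩ := hmul _ _ h2
      obtain ⟨a3, b3⟩ := hmul _ _ h3
      rcases lt_trichotomy d 0 with hd | hd | hd
      · exfalso
        refine hSfree (u - x) (v - y) (-d) (by omega) b1 ?_ ?_
        · convert b2 using 2; ring
        · convert b3 using 2; ring
      · exact hd
      · exact absurd a3 (hSfree x y d hd a1 a2)
  · have : tot N (fun x => if x ∈ seg N then (1 : ℝ) else 0) = N := by
      unfold tot
      rw [sum_congr rfl fun x hx => if_pos hx]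
      simp
    rw [this]
    refine le_trans (le_of_eq ?_) huv
    ring

/-! ### Bounds for the length -/

/-- The tower of lengths consumed by the iteration is at most triply exponential in `1 / k ^ 2`. -/
lemma tower_bound {k s : ℝ} (hk : 0 < k) (hk1 : k ≤ 1) (hs : k ≤ s) (hs1 : s ≤ 1) {n T : ℕ}
    (hn0 : 0 < n) (hn : (n : ℝ) ≤ 1 / k + 1)
    (hT : (T : ℝ) ≤ 864 * 2 ^ 38 / ((k / 2) ^ n * s) ^ 33 + 1) :
    ((T ^ 4 ^ (T * n) : ℕ) : ℝ) ≤ Real.exp (Real.exp (Real.exp (217 / k ^ 2))) := by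
  have hs0 : 0 < s := hk.trans_le hs
  have h1k : 1 ≤ 1 / k := by rw [le_div_iff₀ hk]; linarith
  have h1k2 : 1 / k ≤ 1 / k ^ 2 := by
    have : k ^ 2 ≤ k := by nlinarith
    gcongr
  have hexp2 : (2 : ℝ) ≤ Real.exp 1 := by
    have := Real.add_one_le_exp (1 : ℝ); linarith
  have hexp4 : (4 : ℝ) ≤ Real.exp 2 := by
    have : Real.exp 2 = Real.exp 1 * Real.exp 1 := by rw [← Real.exp_add]; norm_num
    rw [this]; nlinarith
  have hn2 : (n : ℝ) ≤ 2 / k := by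
    have : 2 / k = 1 / k + 1 / k := by ring
    linarith
  set σ := (k / 2) ^ n * s with hσ
  have hσ0 : 0 < σ := by positivity
  have hσ1 : σ ≤ 1 := by
    have : (k / 2) ^ n ≤ 1 := pow_le_one₀ (by positivity) (by linarith)
    exact mul_le_one₀ this hs0.le hs1
  have hσinv : 1 / σ ≤ Real.exp (5 / k ^ 2) := by
    have e1 : 1 / σ = (2 / k) ^ n * (1 / s) := by
      have : (2 / k) ^ n * (k / 2) ^ n = 1 := by
        rw [← mul_pow, div_mul_div_cancel₀ hk.ne', div_self two_ne_zero, one_pow]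
      rw [eq_inv_of_mul_eq_one_left this, hσ, one_div, one_div, mul_inv]
    have e2 : 2 / k ≤ Real.exp (2 / k) := by
      have := Real.add_one_le_exp (2 / k); linarith
    have e3 : 1 / s ≤ Real.exp (1 / k) := by
      have := Real.add_one_le_exp (1 / k)
      have : 1 / s ≤ 1 / k := by gcongr
      linarith
    calc 1 / σ ≤ Real.exp (2 / k) ^ n * Real.exp (1 / k) := by rw [e1]; gcongr
      _ = Real.exp (n * (2 / k) + 1 / k) := by rw [← Real.exp_nat_mul, ← Real.exp_add]
      _ ≤ Real.exp (5 / k ^ 2) := by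
        apply Real.exp_le_exp.2
        have : n * (2 / k) ≤ 2 / k * (2 / k) := by gcongr
        have e4 : 2 / k * (2 / k) = 4 * (1 / k ^ 2) := by field_simp; norm_num
        have e5 : 5 / k ^ 2 = 5 * (1 / k ^ 2) := by ring
        linarith
  have hTb : (T : ℝ) ≤ Real.exp (48 + 165 / k ^ 2) := by
    have e1 : 864 * 2 ^ 38 / σ ^ 33 = 864 * 2 ^ 38 * (1 / σ) ^ 33 := by field_simp
    have e2 : 1 ≤ (1 / σ) ^ 33 := by
      apply one_le_pow₀
      rw [le_div_iff₀ hσ0]; linarith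
    calc (T : ℝ) ≤ 864 * 2 ^ 38 * (1 / σ) ^ 33 + 1 := by rw [← e1]; exact hT
      _ ≤ 2 ^ 48 * (1 / σ) ^ 33 := by nlinarith
      _ ≤ Real.exp 1 ^ 48 * Real.exp (5 / k ^ 2) ^ 33 := by gcongr
      _ = _ := by
        rw [← Real.exp_nat_mul, ← Real.exp_nat_mul, ← Real.exp_add]
        congr 1; push_cast; ring
  have hnb : (n : ℝ) ≤ Real.exp (2 / k ^ 2) := by
    have := Real.add_one_le_exp (2 / k ^ 2)
    have : 2 / k ≤ 2 / k ^ 2 := by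
      have : k ^ 2 ≤ k := by nlinarith
      gcongr
    linarith
  have hprod : 3 * (T * n : ℝ) ≤ Real.exp (217 / k ^ 2) := by
    calc 3 * (T * n : ℝ) ≤ Real.exp 2 * (Real.exp (48 + 165 / k ^ 2) * Real.exp (2 / k ^ 2)) := by
          gcongr
          linarith
      _ = Real.exp (50 + 167 / k ^ 2) := by
          rw [← Real.exp_add, ← Real.exp_add]; congr 1; ring
      _ ≤ _ := by
          apply Real.exp_le_exp.2
          have : 217 / k ^ 2 = 50 * (1 / k ^ 2) + 167 / k ^ 2 := by ring
          rw [this]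
          linarith
  have hTexp : (T : ℝ) ≤ Real.exp T := by
    have := Real.add_one_le_exp (T : ℝ); linarith
  push_cast
  calc (T : ℝ) ^ 4 ^ (T * n) ≤ Real.exp T ^ 4 ^ (T * n) := by gcongr
    _ = Real.exp (4 ^ (T * n) * T) := by rw [← Real.exp_nat_mul]; push_cast; rfl
    _ ≤ Real.exp (Real.exp 2 ^ (T * n) * Real.exp T) := by gcongr
    _ = Real.exp (Real.exp (2 * (T * n) + T)) := by
        rw [← Real.exp_nat_mul, ← Real.exp_add]; congr 2; push_cast; ring
    _ ≤ _ := by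
        apply Real.exp_le_exp.2
        apply Real.exp_le_exp.2
        have : (T : ℝ) * 1 ≤ T * n := by
          gcongr
          exact_mod_cast hn0
        linarith

/-- The quantitative corners theorem in exponential form. The constants are chosen as follows: `δ` is
both the initial density and the initial excess, `k` the density increment per step, `n` the number
of steps, `σ` a lower bound for the excess at all times, and `T` both the minimal length and the
number of passages to progressions per step. -/
lemma card_bound {N : ℕ} (hN : 0 < N) {A : Finset (ℕ × ℕ)} (hA : A ⊆ Icc 1 N ×ˢ Icc 1 N)
    (hfree : CornerFree A) {α : ℝ} (hα : 0 < α) (hα1 : α ≤ 1) (hcard : α * N ^ 2 ≤ A.card) :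
    (N : ℝ) ≤ Real.exp (Real.exp (Real.exp (217 * (8 ^ 10 * 147456) ^ 2 / α ^ 40))) := by
  obtain ⟨e₁, e₂, a, h, ha⟩ := exists_conf hN hA hfree hα.le hcard
  obtain ⟨δ, hδ⟩ : ∃ δ : ℝ, δ = α ^ 2 / 8 := ⟨_, rfl⟩
  rw [← hδ] at ha
  have hδ0 : 0 < δ := by rw [hδ]; positivity
  have hδ1 : δ ≤ 1 := by rw [hδ]; nlinarith
  obtain ⟨k, hk⟩ : ∃ k : ℝ, k = δ ^ 10 / 147456 := ⟨_, rfl⟩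
  have hk0 : 0 < k := by rw [hk]; positivity
  have hδ10 : δ ^ 10 ≤ δ := pow_le_of_le_one hδ0.le hδ1 (by norm_num)
  have hkδ : k ≤ δ := by rw [hk]; linarith
  have hk1 : k ≤ 1 := hkδ.trans hδ1
  obtain ⟨n, hn⟩ : ∃ n : ℕ, n = ⌈1 / k⌉₊ := ⟨_, rfl⟩
  have hn0 : 0 < n := by rw [hn]; exact Nat.ceil_pos.2 (by positivity)
  have hn1 : 1 / k ≤ n := by rw [hn]; exact Nat.le_ceil _
  have hn2 : (n : ℝ) ≤ 1 / k + 1 := by rw [hn]; exact (Nat.ceil_lt_add_one (by positivity)).le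
  obtain ⟨σ, hσ⟩ : ∃ σ : ℝ, σ = (k / 2) ^ n * δ := ⟨_, rfl⟩
  have hσ0 : 0 < σ := by rw [hσ]; positivity
  have hσδ : σ ≤ δ := by
    rw [hσ]
    have : (k / 2) ^ n ≤ 1 := pow_le_one₀ (by positivity) (by linarith)
    nlinarith
  have hσ1 : σ ≤ 1 := hσδ.trans hδ1
  obtain ⟨T, hT⟩ : ∃ T : ℕ, T = ⌈864 * 2 ^ 38 / σ ^ 33⌉₊ := ⟨_, rfl⟩
  have hT1 : 864 * 2 ^ 38 / σ ^ 33 ≤ T := by rw [hT]; exact Nat.le_ceil _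
  have hT2 : (T : ℝ) ≤ 864 * 2 ^ 38 / σ ^ 33 + 1 := by
    rw [hT]; exact (Nat.ceil_lt_add_one (by positivity)).le
  have hT0 : 0 < T := by rw [hT]; exact Nat.ceil_pos.2 (by positivity)
  rw [div_le_iff₀ (by positivity)] at hT1
  have hTσ : 864 ≤ T * (σ * (σ ^ 16 / 2 ^ 19) ^ 2) := by
    have : T * (σ * (σ ^ 16 / 2 ^ 19) ^ 2) = T * σ ^ 33 / 2 ^ 38 := by ring
    rw [this, le_div_iff₀ (by positivity)]
    exact hT1
  have hσ16 : σ ^ 16 ≤ 1 := pow_le_one₀ hσ0.le hσ1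
  have hb : ¬ T ^ 4 ^ (T * n) ≤ N := by
    intro hTN
    refine no_conf hT0 hδ0 hδ1 hσ0 (η := σ ^ 16 / 2 ^ 19) (by positivity) (by linarith) ?_
      hTσ hTσ ?_ n N e₁ e₂ a δ δ h hTN le_rfl ?_ ?_ ha
    · have : δ ^ 10 * (σ / 2) ^ 6 / 8192 = δ ^ 10 * σ ^ 6 / 2 ^ 19 := by ring
      rw [this]
      have : σ ^ 16 = σ ^ 10 * σ ^ 6 := by ring
      rw [this]
      gcongr
    · have e1 : σ ^ 33 ≤ δ ^ 3 * σ ^ 2 := by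
        calc σ ^ 33 = σ ^ 3 * σ ^ 2 * σ ^ 28 := by ring
          _ ≤ δ ^ 3 * σ ^ 2 * 1 := by
            gcongr
            exact pow_le_one₀ hσ0.le hσ1
          _ = _ := mul_one _
      have e2 : T * σ ^ 33 ≤ T * (δ ^ 3 * σ ^ 2) := by gcongr
      have e3 : δ ^ 3 * (σ / 2) ^ 2 * T = T * (δ ^ 3 * σ ^ 2) / 4 := by ring
      rw [e3]
      linarith
    · rw [← hk]
      have : 1 / k * k ≤ n * k := by gcongr
      rw [one_div_mul_cancel hk0.ne'] at this
      linarith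
    · rw [← hk, hσ]
  have hle : (N : ℝ) ≤ ((T ^ 4 ^ (T * n) : ℕ) : ℝ) := by exact_mod_cast (not_le.1 hb).le
  refine hle.trans ((tower_bound hk0 hk1 hkδ hδ1 hn0 hn2 (by rw [← hσ]; exact hT2)).trans
    (le_of_eq ?_))
  congr 3
  rw [hk, hδ]
  field_simp

end

theorem stmt_11 : ∃ C₁ C₂ : ℝ, 0 < C₁ ∧ 0 < C₂ ∧ ∃ N₀ : ℕ, ∀ N : ℕ, N₀ ≤ N →
    cornerFreeDensity N ≤ C₂ / Real.log (Real.log (Real.log N)) ^ C₁ := by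
  classical
  set C : ℝ := 217 * (8 ^ 10 * 147456) ^ 2 with hC
  have hC0 : 0 < C := by rw [hC]; positivity
  -- from `N₀` on, the iterated logarithms are genuinely positive
  obtain ⟨N₀, hN₀⟩ := Filter.eventually_atTop.1
    ((tendsto_natCast_atTop_atTop (R := ℝ)).eventually_ge_atTop
      (Real.exp (Real.exp (Real.exp 1))))
  refine ⟨1 / 40, C ^ (1 / 40 : ℝ), by norm_num, by positivity, N₀, fun N hN => ?_⟩
  have h0 := hN₀ N hN
  have hNr : (0 : ℝ) < N := (Real.exp_pos _).trans_le h0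
  have hN0 : 0 < N := by exact_mod_cast hNr
  have h1 := (Real.le_log_iff_exp_le hNr).2 h0
  have h1' := (Real.exp_pos _).trans_le h1
  have h2 := (Real.le_log_iff_exp_le h1').2 h1
  have h2' := (Real.exp_pos _).trans_le h2
  have h3 := (Real.le_log_iff_exp_le h2').2 h2
  set l := Real.log (Real.log (Real.log N)) with hl
  have hl0 : 0 < l := by linarith
  obtain ⟨A, hA, hAc⟩ := Finset.exists_mem_eq_sup
    ((Finset.Icc 1 N ×ˢ Finset.Icc 1 N).powerset.filter CornerFree)
    ⟨∅, by simp [CornerFree]⟩ Finset.card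
  obtain ⟨hA1, hA2⟩ := Finset.mem_filter.1 hA
  rw [Finset.mem_powerset] at hA1
  have hdens : cornerFreeDensity N = A.card / (N : ℝ) ^ 2 := by
    rw [← hAc]
    unfold cornerFreeDensity
    congr!
  obtain ⟨α, hα⟩ : ∃ α : ℝ, α = A.card / (N : ℝ) ^ 2 := ⟨_, rfl⟩
  rw [hdens, ← hα]
  have hα0 : 0 ≤ α := by rw [hα]; positivity
  rcases hα0.eq_or_lt with h | hαpos
  · rw [← h]; positivity
  have hα1 : α ≤ 1 := by
    rw [hα, div_le_one (by positivity)]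
    have := Finset.card_le_card hA1
    rw [Finset.card_product, Nat.card_Icc, Nat.add_sub_cancel, ← sq] at this
    exact_mod_cast this
  have hb := card_bound hN0 hA1 hA2 hαpos hα1 (le_of_eq (by rw [hα]; field_simp))
  rw [← hC, ← Real.log_le_iff_le_exp hNr, ← Real.log_le_iff_le_exp h1',
    ← Real.log_le_iff_le_exp h2', ← hl, le_div_iff₀ (by positivity)] at hb
  have hpow : α ^ 40 ≤ C / l := by
    rw [le_div_iff₀ hl0]; linarith
  calc α = (α ^ 40) ^ (1 / 40 : ℝ) := by
        have := Real.pow_rpow_inv_natCast hα0 (n := 40) (by norm_num)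
        rw [one_div]; exact_mod_cast this.symm
    _ ≤ (C / l) ^ (1 / 40 : ℝ) := by gcongr
    _ = _ := Real.div_rpow hC0.le hl0.le _
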